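/- For every ε > 0 there is a constant C_ε such that the following holds: for every finite set Λ of distinct points on the truncated paraboloid P² = {(ξ₁, ξ₂, ξ₁² + ξ₂²) : |ξ₁|, |ξ₂| ≤ 1/2} ⊂ ℝ³ there exists R₀ = R₀(Λ) such that for every R ≥ R₀, every Euclidean ball B_R ⊂ ℝ³ of radius R, and every a : Λ → ℂ, one has ( (1/|B_R|) ∫_{B_R} |Σ_{ξ ∈ Λ} a_ξ e(ξ·x)|⁴ dx )^{1/4} ≤ C_ε · |Λ|^{ε} · (Σ_{ξ ∈ Λ} |a_ξ|²)^{1/2}. -/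

import Mathlib

open MeasureTheory Real
open scoped RealInnerProductSpace

noncomputable section

/-- `e(t) = e^{2πit}`. -/
def ee (t : ℝ) : ℂ := Complex.exp (2 * Real.pi * Complex.I * t)

/-- The truncated elliptic paraboloid `P² ⊂ ℝ³`. -/
def parab2 : Set (EuclideanSpace ℝ (Fin 3)) :=
  {x | |x 0| ≤ 1 / 2 ∧ |x 1| ≤ 1 / 2 ∧ x 2 = (x 0) ^ 2 + (x 1) ^ 2}

/-!
Expand `|∑ a_ξ e(ξ·x)|⁴` into quadruples. By the Riemann–Lebesgue lemma, the average of a nonzero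
frequency over a ball tends to zero as the radius grows, uniformly in the centre, so for large `R`
only the additive quadruples `p + q = r + s` contribute. On the paraboloid the relation
`p + q = r + s` forces the horizontal parts to be the vertices of a rectangle: `p - r` is orthogonal
to `p - s`. Thus the additive energy of an `n`-point set is controlled by the number of right angles
spanned by `n` points in the plane, which is `O(n² log n)` by the argument of Pach and Sharir: the
Szemerédi–Trotter bound for rich lines, here deduced from the crossing lemma as in Székely's proof,
is summed over dyadic richness. Splitting the coefficients into dyadic levels costs more powers of
the logarithm, all of which are absorbed by `|Λ|^ε`.
-/

/-! ### Noncrossing geometric graphs -/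

/-- The graph `y = slope * x + intercept` in the plane. -/
@[ext]
structure NonverticalLine where
  slope : ℝ
  intercept : ℝ

namespace NonverticalLine

/-- The ordinate of a line at a given abscissa. -/
def eval (l : NonverticalLine) (t : ℝ) : ℝ := l.slope * t + l.intercept

/-- The signed height of a point above a line; a point lies on `l` exactly when its deviation
from `l` vanishes. -/
def dev (l : NonverticalLine) (p : ℝ × ℝ) : ℝ := p.2 - l.eval p.1

/-- The line through two points; junk when they have the same abscissa. -/
def through (p q : ℝ × ℝ) : NonverticalLine where
  slope := (q.2 - p.2) / (q.1 - p.1)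
  intercept := p.2 - (q.2 - p.2) / (q.1 - p.1) * p.1

theorem dev_through_left (p q : ℝ × ℝ) : (through p q).dev p = 0 := by
  simp [dev, eval, through]

theorem dev_through_right {p q : ℝ × ℝ} (h : p.1 ≠ q.1) : (through p q).dev q = 0 := by
  have : q.1 - p.1 ≠ 0 := sub_ne_zero.2 h.symm
  simp only [dev, eval, through]
  field_simp
  ring

theorem eval_sub_eval (l : NonverticalLine) (s t : ℝ) :
    l.eval t - l.eval s = l.slope * (t - s) := by
  simp only [eval]
  ring

theorem eq_of_eval_eq {l m : NonverticalLine} {s t : ℝ} (hst : s ≠ t)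
    (hs : l.eval s = m.eval s) (ht : l.eval t = m.eval t) : l = m := by
  have slope_eq : l.slope = m.slope := by
    refine mul_right_cancel₀ (sub_ne_zero.2 hst.symm) ?_
    rw [← eval_sub_eval, ← eval_sub_eval, hs, ht]
  refine NonverticalLine.ext slope_eq ?_
  simpa [eval, slope_eq] using hs

theorem snd_eq_eval {l : NonverticalLine} {p : ℝ × ℝ} (h : l.dev p = 0) : p.2 = l.eval p.1 :=
  sub_eq_zero.1 h

theorem eval_lt_eval_iff_slope_lt {l m : NonverticalLine} {p : ℝ × ℝ} (hl : l.dev p = 0)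
    (hm : m.dev p = 0) {t : ℝ} (ht : p.1 < t) : l.eval t < m.eval t ↔ l.slope < m.slope := by
  have hlt := l.eval_sub_eval p.1 t
  have hmt := m.eval_sub_eval p.1 t
  rw [← snd_eq_eval hl] at hlt
  rw [← snd_eq_eval hm] at hmt
  rw [← sub_lt_sub_iff_right p.2, hlt, hmt, mul_lt_mul_iff_left₀ (sub_pos.2 ht)]

theorem eq_of_fst_eq {l : NonverticalLine} {p q : ℝ × ℝ} (hp : l.dev p = 0) (hq : l.dev q = 0)
    (h : p.1 = q.1) : p = q :=
  Prod.ext h (by rw [snd_eq_eval hp, snd_eq_eval hq, h])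

theorem eq_of_dev_eq_zero {l m : NonverticalLine} {p q : ℝ × ℝ} (hpq : p.1 ≠ q.1)
    (hlp : l.dev p = 0) (hlq : l.dev q = 0) (hmp : m.dev p = 0) (hmq : m.dev q = 0) : l = m :=
  eq_of_eval_eq hpq (by rw [← snd_eq_eval hlp, snd_eq_eval hmp])
    (by rw [← snd_eq_eval hlq, snd_eq_eval hmq])

theorem eq_of_slope_eq {l m : NonverticalLine} {p : ℝ × ℝ} (hs : l.slope = m.slope)
    (hl : l.dev p = 0) (hm : m.dev p = 0) : l = m :=
  NonverticalLine.ext hs (by simp only [dev, eval, hs] at hl hm; linarith)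

end NonverticalLine

/-- A straight-line edge in the plane, listed from left to right. -/
@[ext]
structure Segment where
  left : ℝ × ℝ
  right : ℝ × ℝ
  left_lt_right : left.1 < right.1

namespace Segment

theorem left_right_injective : Function.Injective fun e : Segment => (e.left, e.right) :=
  fun _ _ h => Segment.ext (congrArg Prod.fst h) (congrArg Prod.snd h)

/-- The line carrying a segment. -/
def line (e : Segment) : NonverticalLine := .through e.left e.right

theorem line_dev_left (e : Segment) : e.line.dev e.left = 0 :=
  NonverticalLine.dev_through_left _ _

theorem line_dev_right (e : Segment) : e.line.dev e.right = 0 :=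
  NonverticalLine.dev_through_right e.left_lt_right.ne

/-- Two segments cross when each of them strictly separates the endpoints of the other. -/
def Crosses (e f : Segment) : Prop :=
  e.line.dev f.left * e.line.dev f.right < 0 ∧ f.line.dev e.left * f.line.dev e.right < 0

theorem crosses_of_eval_lt {e f : Segment} {s t : ℝ} (hst : s < t)
    (hes : e.left.1 ≤ s) (hfs : f.left.1 ≤ s) (het : t ≤ e.right.1) (hft : t ≤ f.right.1)
    (hs : f.line.eval s < e.line.eval s) (ht : e.line.eval t < f.line.eval t) :
    e.Crosses f := by
  have slope_lt : e.line.slope < f.line.slope := by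
    have := e.line.eval_sub_eval s t
    have := f.line.eval_sub_eval s t
    nlinarith
  have below {u : ℝ} (hu : u ≤ s) : f.line.eval u < e.line.eval u := by
    simp only [NonverticalLine.eval] at hs ⊢
    nlinarith
  have above {u : ℝ} (hu : t ≤ u) : e.line.eval u < f.line.eval u := by
    simp only [NonverticalLine.eval] at ht ⊢
    nlinarith
  simp only [Crosses, NonverticalLine.dev, NonverticalLine.snd_eq_eval e.line_dev_left,
    NonverticalLine.snd_eq_eval e.line_dev_right, NonverticalLine.snd_eq_eval f.line_dev_left,
    NonverticalLine.snd_eq_eval f.line_dev_right]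
  exact ⟨mul_neg_of_neg_of_pos (sub_neg.2 (below hfs)) (sub_pos.2 (above hft)),
    mul_neg_of_pos_of_neg (sub_pos.2 (below hes)) (sub_neg.2 (above het))⟩

end Segment

/-- A geometric graph with vertex set `S` and straight edges `E`: the edges join vertices and
contain no vertex in their relative interior. Edges may cross. -/
structure IsGeometricGraph (S : Finset (ℝ × ℝ)) (E : Finset Segment) : Prop where
  left_mem : ∀ e ∈ E, e.left ∈ S
  right_mem : ∀ e ∈ E, e.right ∈ S
  dev_ne_zero : ∀ e ∈ E, ∀ w ∈ S, e.left.1 < w.1 → w.1 < e.right.1 → e.line.dev w ≠ 0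

section Planar

variable {S : Finset (ℝ × ℝ)} {E : Finset Segment}

theorem IsGeometricGraph.eq_of_line_eq (hE : IsGeometricGraph S E) {e f : Segment}
    (he : e ∈ E) (hf : f ∈ E) (hline : e.line = f.line)
    (hef : e.left.1 < f.right.1) (hfe : f.left.1 < e.right.1) : e = f := by
  have left_le {e f : Segment} (he : e ∈ E) (hf : f ∈ E) (hline : e.line = f.line)
      (hfe : f.left.1 < e.right.1) : f.left.1 ≤ e.left.1 := by
    by_contra! h
    exact hE.dev_ne_zero e he _ (hE.left_mem f hf) h hfe (hline ▸ f.line_dev_left)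
  have le_right {e f : Segment} (he : e ∈ E) (hf : f ∈ E) (hline : e.line = f.line)
      (hef : e.left.1 < f.right.1) : e.right.1 ≤ f.right.1 := by
    by_contra! h
    exact hE.dev_ne_zero e he _ (hE.right_mem f hf) hef h (hline ▸ f.line_dev_right)
  have left_eq := (left_le hf he hline.symm hef).antisymm (left_le he hf hline hfe)
  have right_eq := (le_right he hf hline hef).antisymm (le_right hf he hline.symm hfe)
  exact Segment.ext
    (NonverticalLine.eq_of_fst_eq e.line_dev_left (hline ▸ f.line_dev_left) left_eq)
    (NonverticalLine.eq_of_fst_eq e.line_dev_right (hline ▸ f.line_dev_right) right_eq)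

theorem IsGeometricGraph.eq_of_left_eq_of_slope_eq (hE : IsGeometricGraph S E) {e f : Segment}
    (he : e ∈ E) (hf : f ∈ E) (hleft : e.left = f.left) (hslope : e.line.slope = f.line.slope) :
    e = f :=
  hE.eq_of_line_eq he hf
    (NonverticalLine.eq_of_slope_eq hslope e.line_dev_left (hleft ▸ f.line_dev_left))
    (hleft ▸ f.left_lt_right) (hleft ▸ e.left_lt_right)

theorem IsGeometricGraph.mono (hE : IsGeometricGraph S E) {S' : Finset (ℝ × ℝ)}
    {E' : Finset Segment} (hS' : S' ⊆ S) (hE' : E' ⊆ E) (left_mem : ∀ e ∈ E', e.left ∈ S')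
    (right_mem : ∀ e ∈ E', e.right ∈ S') : IsGeometricGraph S' E' where
  left_mem := left_mem
  right_mem := right_mem
  dev_ne_zero e he w hw := hE.dev_ne_zero e (hE' he) w (hS' hw)

/-- `f` is the edge following `e` counterclockwise around their common left endpoint, and `w` is
a leftmost vertex of the closed sector between `e` and `f`. -/
structure IsWedge (S : Finset (ℝ × ℝ)) (E : Finset Segment) (e f : Segment) (w : ℝ × ℝ) :
    Prop where
  lower_mem : e ∈ E
  upper_mem : f ∈ E
  left_eq : f.left = e.left
  slope_lt : e.line.slope < f.line.slope
  slope_le : ∀ g ∈ E, g.left = e.left → e.line.slope < g.line.slope →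
    f.line.slope ≤ g.line.slope
  tip_mem : w ∈ S
  left_lt_tip : e.left.1 < w.1
  lower_dev_nonneg : 0 ≤ e.line.dev w
  upper_dev_nonpos : f.line.dev w ≤ 0
  tip_le : ∀ p ∈ S, e.left.1 < p.1 → 0 ≤ e.line.dev p → f.line.dev p ≤ 0 → w.1 ≤ p.1

namespace IsWedge

variable {e f e' f' : Segment} {w : ℝ × ℝ}

theorem upper_dev_left (h : IsWedge S E e f w) : f.line.dev e.left = 0 :=
  h.left_eq ▸ f.line_dev_left

theorem lower_eval_lt (h : IsWedge S E e f w) {t : ℝ} (ht : e.left.1 < t) :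
    e.line.eval t < f.line.eval t :=
  (NonverticalLine.eval_lt_eval_iff_slope_lt e.line_dev_left h.upper_dev_left ht).2 h.slope_lt

theorem tip_le_lower (hE : IsGeometricGraph S E) (h : IsWedge S E e f w) :
    w.1 ≤ e.right.1 := by
  refine h.tip_le _ (hE.right_mem e h.lower_mem) e.left_lt_right e.line_dev_right.ge ?_
  rw [NonverticalLine.dev, NonverticalLine.snd_eq_eval e.line_dev_right]
  exact sub_nonpos.2 (h.lower_eval_lt e.left_lt_right).le

theorem tip_le_upper (hE : IsGeometricGraph S E) (h : IsWedge S E e f w) :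
    w.1 ≤ f.right.1 := by
  have hlt : e.left.1 < f.right.1 := h.left_eq ▸ f.left_lt_right
  refine h.tip_le _ (hE.right_mem f h.upper_mem) hlt ?_ f.line_dev_right.le
  rw [NonverticalLine.dev, NonverticalLine.snd_eq_eval f.line_dev_right]
  exact sub_nonneg.2 (h.lower_eval_lt hlt).le

theorem lower_eval_lt_tip (h : IsWedge S E e f w) (h' : IsWedge S E e' f' w)
    (htype : f.line.dev w = 0 ↔ f'.line.dev w = 0) : e.line.eval w.1 < f'.line.eval w.1 := by
  have hlow : e.line.eval w.1 ≤ w.2 := sub_nonneg.1 h.lower_dev_nonneg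
  rcases h'.upper_dev_nonpos.lt_or_eq with hlt | heq
  · exact hlow.trans_lt (sub_neg.1 hlt)
  · rw [← NonverticalLine.snd_eq_eval heq, NonverticalLine.snd_eq_eval (htype.2 heq)]
    exact h.lower_eval_lt h.left_lt_tip

theorem left_eq_of_le (hE : IsGeometricGraph S E) (nc : ∀ e ∈ E, ∀ f ∈ E, ¬ e.Crosses f)
    (h : IsWedge S E e f w) (h' : IsWedge S E e' f' w)
    (htype : f.line.dev w = 0 ↔ f'.line.dev w = 0) (hle : e.left.1 ≤ e'.left.1) :
    e.left = e'.left := by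
  by_contra hne
  have outside : e.line.dev e'.left < 0 ∨ 0 < f.line.dev e'.left := by
    rcases hle.lt_or_eq with hlt | heq
    · by_contra! hin
      exact (h.tip_le _ (hE.left_mem e' h'.lower_mem) hlt hin.1 hin.2).not_gt h'.left_lt_tip
    · have hsnd : e.left.2 ≠ e'.left.2 := fun hsnd => hne (Prod.ext heq hsnd)
      rw [NonverticalLine.dev, NonverticalLine.dev, ← heq,
        ← NonverticalLine.snd_eq_eval e.line_dev_left,
        ← NonverticalLine.snd_eq_eval h.upper_dev_left, sub_neg, sub_pos]
      exact hsnd.symm.lt_or_gt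
  rcases outside with hbelow | habove
  · refine nc e h.lower_mem f' h'.upper_mem (Segment.crosses_of_eval_lt h'.left_lt_tip hle
      (h'.left_eq ▸ le_rfl) (h.tip_le_lower hE) (h'.tip_le_upper hE) ?_
      (h.lower_eval_lt_tip h' htype))
    rw [← NonverticalLine.snd_eq_eval h'.upper_dev_left]
    exact sub_neg.1 hbelow
  · refine nc e' h'.lower_mem f h.upper_mem (Segment.crosses_of_eval_lt h'.left_lt_tip le_rfl
      (h.left_eq ▸ hle) (h'.tip_le_lower hE) (h.tip_le_upper hE) ?_
      (h'.lower_eval_lt_tip h htype.symm))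
    rw [← NonverticalLine.snd_eq_eval e'.line_dev_left]
    exact sub_pos.1 habove

theorem slope_le_of_left_eq (h : IsWedge S E e f w) (h' : IsWedge S E e' f' w)
    (htype : f.line.dev w = 0 ↔ f'.line.dev w = 0) (hleft : e.left = e'.left) :
    e'.line.slope ≤ e.line.slope := by
  have dev_left : e'.line.dev e.left = 0 := hleft ▸ e'.line_dev_left
  have slope_lt : e'.line.slope < f.line.slope :=
    (NonverticalLine.eval_lt_eval_iff_slope_lt dev_left h.upper_dev_left h.left_lt_tip).1
      (h'.lower_eval_lt_tip h htype.symm)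
  by_contra! hlt
  exact (h.slope_le e' h'.lower_mem hleft.symm hlt).not_gt slope_lt

theorem lower_eq (hE : IsGeometricGraph S E) (nc : ∀ e ∈ E, ∀ f ∈ E, ¬ e.Crosses f)
    (h : IsWedge S E e f w) (h' : IsWedge S E e' f' w)
    (htype : f.line.dev w = 0 ↔ f'.line.dev w = 0) : e = e' := by
  have hleft : e.left = e'.left := by
    rcases le_total e.left.1 e'.left.1 with hle | hle
    · exact h.left_eq_of_le hE nc h' htype hle
    · exact (h'.left_eq_of_le hE nc h htype.symm hle).symm
  exact hE.eq_of_left_eq_of_slope_eq h.lower_mem h'.lower_mem hleft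
    ((h'.slope_le_of_left_eq h htype.symm hleft.symm).antisymm
      (h.slope_le_of_left_eq h' htype hleft))

end IsWedge

theorem IsGeometricGraph.exists_isWedge (hE : IsGeometricGraph S E) {e g : Segment}
    (he : e ∈ E) (hg : g ∈ E) (hleft : g.left = e.left) (hslope : e.line.slope < g.line.slope) :
    ∃ f w, IsWedge S E e f w := by
  classical
  obtain ⟨f, hf, hfmin⟩ := Finset.exists_min_image
    {f ∈ E | f.left = e.left ∧ e.line.slope < f.line.slope} (fun f => f.line.slope)
    ⟨g, Finset.mem_filter.2 ⟨hg, hleft, hslope⟩⟩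
  obtain ⟨hfE, hfleft, hfslope⟩ := Finset.mem_filter.1 hf
  have right_le : f.line.dev e.right ≤ 0 := by
    have dev_left : f.line.dev e.left = 0 := hfleft ▸ f.line_dev_left
    rw [NonverticalLine.dev, NonverticalLine.snd_eq_eval e.line_dev_right]
    exact sub_nonpos.2 ((NonverticalLine.eval_lt_eval_iff_slope_lt e.line_dev_left dev_left
      e.left_lt_right).2 hfslope).le
  obtain ⟨w, hw, hwmin⟩ := Finset.exists_min_image
    {p ∈ S | e.left.1 < p.1 ∧ 0 ≤ e.line.dev p ∧ f.line.dev p ≤ 0} Prod.fst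
    ⟨e.right, Finset.mem_filter.2
      ⟨hE.right_mem e he, e.left_lt_right, e.line_dev_right.ge, right_le⟩⟩
  obtain ⟨hwS, hwlt, hwlow, hwup⟩ := Finset.mem_filter.1 hw
  exact ⟨f, w, he, hfE, hfleft, hfslope,
    fun g hg h₁ h₂ => hfmin g (Finset.mem_filter.2 ⟨hg, h₁, h₂⟩), hwS, hwlt, hwlow, hwup,
    fun p hp h₁ h₂ h₃ => hwmin p (Finset.mem_filter.2 ⟨hp, h₁, h₂, h₃⟩)⟩

theorem IsGeometricGraph.card_le_of_forall_exists_isWedge (hE : IsGeometricGraph S E)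
    (nc : ∀ e ∈ E, ∀ f ∈ E, ¬ e.Crosses f) (p : Prop) {N : Finset Segment}
    (hN : ∀ e ∈ N, ∃ f w, IsWedge S E e f w ∧ (f.line.dev w = 0 ↔ p)) : N.card ≤ S.card := by
  choose! f w hw htype using hN
  refine Finset.card_le_card_of_injOn w (fun e he => (hw e he).tip_mem) fun e he e' he' heq => ?_
  have hw' := hw e' he'
  have htype' := htype e' he'
  rw [← heq] at hw' htype'
  exact (hw e he).lower_eq hE nc hw' ((htype e he).trans htype'.symm)

/-- Every edge is either the topmost one at its left endpoint or the lower side of a wedge, whose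
tip either does or does not lie on the upper side; each of these three classes injects into the
vertices. -/
theorem IsGeometricGraph.card_le_of_noncrossing (hE : IsGeometricGraph S E)
    (nc : ∀ e ∈ E, ∀ f ∈ E, ¬ e.Crosses f) : E.card ≤ 3 * S.card := by
  classical
  set T : Finset Segment := {e ∈ E | ∀ f ∈ E, f.left = e.left → f.line.slope ≤ e.line.slope}
  set N : Prop → Finset Segment :=
    fun p => {e ∈ E | ∃ f w, IsWedge S E e f w ∧ (f.line.dev w = 0 ↔ p)} with hN
  have card_N (p : Prop) : (N p).card ≤ S.card :=
    hE.card_le_of_forall_exists_isWedge nc p fun e he => (Finset.mem_filter.1 he).2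
  have card_T : T.card ≤ S.card := by
    refine Finset.card_le_card_of_injOn Segment.left
      (fun e he => hE.left_mem e (Finset.mem_filter.1 he).1) fun e he f hf heq => ?_
    obtain ⟨heE, hemax⟩ := Finset.mem_filter.1 he
    obtain ⟨hfE, hfmax⟩ := Finset.mem_filter.1 hf
    exact hE.eq_of_left_eq_of_slope_eq heE hfE heq
      ((hfmax e heE heq).antisymm (hemax f hfE heq.symm))
  have cover : E ⊆ T ∪ (N True ∪ N False) := by
    intro e he
    by_cases htop : ∀ f ∈ E, f.left = e.left → f.line.slope ≤ e.line.slope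
    · exact Finset.mem_union_left _ (Finset.mem_filter.2 ⟨he, htop⟩)
    · push Not at htop
      obtain ⟨g, hg, hleft, hslope⟩ := htop
      obtain ⟨f, w, hw⟩ := hE.exists_isWedge he hg hleft hslope
      refine Finset.mem_union_right _ (Finset.mem_union.2 ?_)
      simp only [hN, Finset.mem_filter, he, true_and]
      by_cases hdev : f.line.dev w = 0
      · exact .inl ⟨f, w, hw, by simp [hdev]⟩
      · exact .inr ⟨f, w, hw, by simp [hdev]⟩
  have := Finset.card_le_card cover
  have := Finset.card_union_le T (N True ∪ N False)
  have := Finset.card_union_le (N True) (N False)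
  linarith [card_N True, card_N False]

end Planar

/-! ### The crossing lemma -/

section Sampling

variable {α β : Type*}

/-- The probability that the random subset of `S` keeping each point independently with
probability `p` is the set `T`. -/
def bernoulliWeight (p : ℝ) (S T : Finset α) : ℝ := p ^ T.card * (1 - p) ^ (S.card - T.card)

theorem bernoulliWeight_nonneg {p : ℝ} (hp₀ : 0 ≤ p) (hp₁ : p ≤ 1) (S T : Finset α) :
    0 ≤ bernoulliWeight p S T :=
  mul_nonneg (pow_nonneg hp₀ _) (pow_nonneg (sub_nonneg.2 hp₁) _)

theorem sum_bernoulliWeight_Icc [DecidableEq α] (p : ℝ) {A S : Finset α} (h : A ⊆ S) :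
    ∑ T ∈ Finset.Icc A S, bernoulliWeight p S T = p ^ A.card := by
  have disj {U : Finset α} (hU : U ∈ (S \ A).powerset) : Disjoint A U :=
    Finset.disjoint_sdiff.mono_right (Finset.mem_powerset.1 hU)
  have inj : Set.InjOn (A ∪ ·) (S \ A).powerset := fun U hU V hV hUV => by
    rw [← Finset.union_sdiff_cancel_left (disj hU), ← Finset.union_sdiff_cancel_left (disj hV)]
    exact congrArg (· \ A) hUV
  rw [Finset.Icc_eq_image_powerset h, Finset.sum_image inj]
  calc ∑ U ∈ (S \ A).powerset, bernoulliWeight p S (A ∪ U)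
      = ∑ U ∈ (S \ A).powerset,
          p ^ A.card * (p ^ U.card * (1 - p) ^ ((S \ A).card - U.card)) := by
        refine Finset.sum_congr rfl fun U hU => ?_
        rw [bernoulliWeight, Finset.card_union_of_disjoint (disj hU),
          Finset.card_sdiff_of_subset h, Nat.sub_sub, pow_add, mul_assoc]
    _ = p ^ A.card := by
        rw [← Finset.mul_sum, Finset.sum_pow_mul_eq_add_pow]
        simp

theorem sum_bernoulliWeight_mul_card [DecidableEq α] (p : ℝ) {S : Finset α} (B : Finset β)
    (F : β → Finset α) {k : ℕ} (hF : ∀ b ∈ B, F b ⊆ S) (hk : ∀ b ∈ B, (F b).card = k) :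
    ∑ T ∈ S.powerset, bernoulliWeight p S T * ({b ∈ B | F b ⊆ T} : Finset β).card =
      p ^ k * B.card := by
  have inner (b : β) (hb : b ∈ B) :
      ∑ T ∈ S.powerset, (if F b ⊆ T then bernoulliWeight p S T else 0) = p ^ k := by
    rw [← Finset.sum_filter, ← hk b hb, ← sum_bernoulliWeight_Icc p (hF b hb)]
    congr 1
    ext T
    simp [and_comm]
  simp_rw [Finset.card_filter, Nat.cast_sum, Finset.mul_sum]
  rw [Finset.sum_comm, mul_comm, ← nsmul_eq_mul, ← Finset.sum_const]
  refine Finset.sum_congr rfl fun b hb => ?_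
  rw [← inner b hb]
  exact Finset.sum_congr rfl fun T _ => by split_ifs <;> simp

end Sampling

namespace Segment

open scoped Classical in
/-- The two endpoints of a segment. -/
def ends (e : Segment) : Finset (ℝ × ℝ) := {e.left, e.right}

theorem card_ends (e : Segment) : e.ends.card = 2 :=
  Finset.card_pair fun h => e.left_lt_right.ne (congrArg Prod.fst h)

theorem disjoint_ends_of_crosses {e f : Segment} (h : e.Crosses f) :
    Disjoint e.ends f.ends := by
  have hleft : e.line.dev f.left ≠ 0 := left_ne_zero_of_mul h.1.ne
  have hright : e.line.dev f.right ≠ 0 := right_ne_zero_of_mul h.1.ne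
  rw [Finset.disjoint_left]
  intro p hp hp'
  have hp₀ : e.line.dev p = 0 := by
    rcases by simpa [ends] using hp with rfl | rfl
    exacts [e.line_dev_left, e.line_dev_right]
  rcases by simpa [ends] using hp' with rfl | rfl
  exacts [hleft hp₀, hright hp₀]

end Segment

open scoped Classical in
/-- The ordered pairs of crossing edges. -/
def crossings (E : Finset Segment) : Finset (Segment × Segment) :=
  {c ∈ E ×ˢ E | c.1.Crosses c.2}

theorem mem_crossings {E : Finset Segment} {c : Segment × Segment} :
    c ∈ crossings E ↔ (c.1 ∈ E ∧ c.2 ∈ E) ∧ c.1.Crosses c.2 := by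
  simp [crossings]

section CrossingLemma

variable {S : Finset (ℝ × ℝ)} {E : Finset Segment}

theorem IsGeometricGraph.ends_subset (hE : IsGeometricGraph S E) {e : Segment} (he : e ∈ E) :
    e.ends ⊆ S := by
  simp [Segment.ends, Finset.insert_subset_iff, hE.left_mem e he, hE.right_mem e he]

theorem IsGeometricGraph.card_le_add_crossings (hE : IsGeometricGraph S E) :
    E.card ≤ 3 * S.card + (crossings E).card := by
  classical
  induction E using Finset.strongInduction with
  | H E ih =>
    by_cases nc : ∀ e ∈ E, ∀ f ∈ E, ¬ e.Crosses f
    · exact (hE.card_le_of_noncrossing nc).trans (Nat.le_add_right _ _)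
    push Not at nc
    obtain ⟨e, he, f, hf, hef⟩ := nc
    have sub : E.erase e ⊆ E := Finset.erase_subset _ _
    have ih_erase := ih _ (Finset.erase_ssubset he) (hE.mono subset_rfl sub
      (fun g hg => hE.left_mem g (sub hg)) fun g hg => hE.right_mem g (sub hg))
    have crossings_lt : (crossings (E.erase e)).card < (crossings E).card := by
      refine Finset.card_lt_card ((Finset.ssubset_iff_of_subset fun c hc => ?_).2 ⟨(e, f), ?_, ?_⟩)
      · rw [mem_crossings] at hc ⊢
        exact ⟨⟨sub hc.1.1, sub hc.1.2⟩, hc.2⟩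
      · exact mem_crossings.2 ⟨⟨he, hf⟩, hef⟩
      · simp [mem_crossings]
    have := Finset.card_erase_add_one he
    lia

open scoped Classical in
theorem crossings_filter_ends_subset (E : Finset Segment) (T : Finset (ℝ × ℝ)) :
    crossings {e ∈ E | e.ends ⊆ T} = {c ∈ crossings E | c.1.ends ∪ c.2.ends ⊆ T} := by
  ext c
  simp only [mem_crossings, Finset.mem_filter, Finset.union_subset_iff]
  tauto

theorem IsGeometricGraph.sq_mul_card_le (hE : IsGeometricGraph S E) {p : ℝ} (hp₀ : 0 ≤ p)
    (hp₁ : p ≤ 1) : p ^ 2 * E.card ≤ 3 * (p * S.card) + p ^ 4 * (crossings E).card := by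
  classical
  have vertices : ∑ T ∈ S.powerset, bernoulliWeight p S T * T.card = p * S.card := by
    rw [← pow_one p, ← sum_bernoulliWeight_mul_card p S (fun v => {v})
      (fun v hv => Finset.singleton_subset_iff.2 hv) (by simp), pow_one]
    refine Finset.sum_congr rfl fun T hT => ?_
    simp only [Finset.singleton_subset_iff]
    rw [Finset.filter_mem_eq_inter, Finset.inter_eq_right.2 (Finset.mem_powerset.1 hT)]
  have edges := sum_bernoulliWeight_mul_card p E Segment.ends
    (fun e he => hE.ends_subset he) fun e _ => e.card_ends
  have crossing_pairs := sum_bernoulliWeight_mul_card p (crossings E)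
    (fun c => c.1.ends ∪ c.2.ends)
    (fun c hc => Finset.union_subset (hE.ends_subset (mem_crossings.1 hc).1.1)
      (hE.ends_subset (mem_crossings.1 hc).1.2))
    (k := 4) fun c hc => by
      rw [Finset.card_union_of_disjoint (Segment.disjoint_ends_of_crosses (mem_crossings.1 hc).2),
        Segment.card_ends, Segment.card_ends]
  rw [← edges, ← crossing_pairs, ← vertices, Finset.mul_sum, ← Finset.sum_add_distrib]
  refine Finset.sum_le_sum fun T hT => ?_
  have graph : IsGeometricGraph T {e ∈ E | e.ends ⊆ T} :=
    hE.mono (Finset.mem_powerset.1 hT) (Finset.filter_subset _ _)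
      (fun e he => (Finset.mem_filter.1 he).2 (by simp [Segment.ends]))
      fun e he => (Finset.mem_filter.1 he).2 (by simp [Segment.ends])
  have card_le : ((({e ∈ E | e.ends ⊆ T} : Finset Segment).card : ℕ) : ℝ) ≤ 3 * T.card +
      ({c ∈ crossings E | c.1.ends ∪ c.2.ends ⊆ T} : Finset (Segment × Segment)).card := by
    rw [← crossings_filter_ends_subset]
    exact_mod_cast graph.card_le_add_crossings
  linarith [mul_le_mul_of_nonneg_left card_le (bernoulliWeight_nonneg hp₀ hp₁ S T)]

/-- The crossing lemma. -/
theorem IsGeometricGraph.card_pow_three_le (hE : IsGeometricGraph S E)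
    (h : 6 * S.card ≤ E.card) : E.card ^ 3 ≤ 72 * S.card ^ 2 * (crossings E).card := by
  obtain rfl | ⟨e, he⟩ := E.eq_empty_or_nonempty
  · simp
  have hS : (0 : ℝ) < S.card := by exact_mod_cast Finset.card_pos.2 ⟨_, hE.left_mem e he⟩
  have hEpos : (0 : ℝ) < E.card := by exact_mod_cast Finset.card_pos.2 ⟨e, he⟩
  -- at this sampling rate the vertex term is half of the edge term
  have sampled := hE.sq_mul_card_le (p := 6 * S.card / E.card) (by positivity)
    ((div_le_one hEpos).2 (by exact_mod_cast h))
  generalize (crossings E).card = X at sampled ⊢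
  have : (18 * (S.card : ℝ) ^ 2) * (E.card : ℝ) ^ 3 ≤
      (18 * (S.card : ℝ) ^ 2) * (72 * S.card ^ 2 * X) := by
    field_simp at sampled
    nlinarith
  exact_mod_cast le_of_mul_le_mul_left this (by positivity)

end CrossingLemma

/-! ### Rich lines -/

section SzemerediTrotter

open scoped Classical in
/-- The points of `P` incident to a line. -/
def pointsOn (P : Finset (ℝ × ℝ)) (l : NonverticalLine) : Finset (ℝ × ℝ) :=
  {p ∈ P | l.dev p = 0}

variable {P : Finset (ℝ × ℝ)} {l : NonverticalLine}

theorem mem_pointsOn {p : ℝ × ℝ} : p ∈ pointsOn P l ↔ p ∈ P ∧ l.dev p = 0 := by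
  simp [pointsOn]

theorem card_pointsOn_le (P : Finset (ℝ × ℝ)) (l : NonverticalLine) :
    (pointsOn P l).card ≤ P.card :=
  Finset.card_le_card fun _ hp => (mem_pointsOn.1 hp).1

open scoped Classical in
/-- The segments joining consecutive points of `P` on the lines of `L`. -/
def segments (P : Finset (ℝ × ℝ)) (L : Finset NonverticalLine) : Finset Segment :=
  {e ∈ (P ×ˢ P).preimage (fun e => (e.left, e.right)) Segment.left_right_injective.injOn |
    e.line ∈ L ∧ ∀ w ∈ P, e.left.1 < w.1 → w.1 < e.right.1 → e.line.dev w ≠ 0}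

theorem mem_segments {L : Finset NonverticalLine} {e : Segment} :
    e ∈ segments P L ↔ (e.left ∈ P ∧ e.right ∈ P) ∧ e.line ∈ L ∧
      ∀ w ∈ P, e.left.1 < w.1 → w.1 < e.right.1 → e.line.dev w ≠ 0 := by
  simp only [segments, Finset.mem_filter, Finset.mem_preimage, Finset.mem_product]

theorem isGeometricGraph_segments (P : Finset (ℝ × ℝ)) (L : Finset NonverticalLine) :
    IsGeometricGraph P (segments P L) where
  left_mem _ he := (mem_segments.1 he).1.1
  right_mem _ he := (mem_segments.1 he).1.2
  dev_ne_zero _ he := (mem_segments.1 he).2.2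

theorem mem_Ioo_of_mul_sub_mul_mul_sub_neg {κ a b s : ℝ} (hab : a < b)
    (h : κ * (a - s) * (κ * (b - s)) < 0) : s ∈ Set.Ioo a b := by
  have neg : (a - s) * (b - s) < 0 := by
    rw [mul_mul_mul_comm] at h
    exact neg_of_mul_neg_right h (mul_self_nonneg κ)
  rcases mul_neg_iff.1 neg with ⟨ha, hb⟩ | ⟨ha, hb⟩
  · linarith
  · exact ⟨sub_neg.1 ha, sub_pos.1 hb⟩

theorem Segment.Crosses.exists_eval_eq {e f : Segment} (h : e.Crosses f) :
    ∃ s, e.line.eval s = f.line.eval s ∧ s ∈ Set.Ioo e.left.1 e.right.1 ∧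
      s ∈ Set.Ioo f.left.1 f.right.1 := by
  set κ := f.line.slope - e.line.slope with hκ
  have diff (t : ℝ) : f.line.eval t - e.line.eval t =
      κ * t + (f.line.intercept - e.line.intercept) := by
    simp only [NonverticalLine.eval, hκ]
    ring
  obtain ⟨he, hf⟩ := h
  simp only [NonverticalLine.dev, NonverticalLine.snd_eq_eval e.line_dev_left,
    NonverticalLine.snd_eq_eval e.line_dev_right, NonverticalLine.snd_eq_eval f.line_dev_left,
    NonverticalLine.snd_eq_eval f.line_dev_right] at he hf
  have hκ₀ : κ ≠ 0 := fun h₀ => by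
    rw [diff, diff, h₀, zero_mul, zero_mul] at he
    exact he.not_ge (mul_self_nonneg _)
  set s := (e.line.intercept - f.line.intercept) / κ with hs
  have diff_s (t : ℝ) : f.line.eval t - e.line.eval t = κ * (t - s) := by
    rw [diff, hs]
    field_simp
    ring
  refine ⟨s, (sub_eq_zero.1 (by rw [diff_s, sub_self, mul_zero])).symm,
    mem_Ioo_of_mul_sub_mul_mul_sub_neg (κ := κ) e.left_lt_right ?_,
    mem_Ioo_of_mul_sub_mul_mul_sub_neg (κ := κ) f.left_lt_right ?_⟩
  · rwa [← diff_s, ← diff_s, ← neg_mul_neg, neg_sub, neg_sub]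
  · rwa [← diff_s, ← diff_s]

theorem Segment.Crosses.line_ne {e f : Segment} (h : e.Crosses f) : e.line ≠ f.line :=
  fun heq => left_ne_zero_of_mul h.1.ne (heq ▸ f.line_dev_left)

theorem card_crossings_segments_le (P : Finset (ℝ × ℝ)) (L : Finset NonverticalLine) :
    (crossings (segments P L)).card ≤ L.card ^ 2 := by
  have graph := isGeometricGraph_segments P L
  rw [sq, ← Finset.card_product]
  refine Finset.card_le_card_of_injOn (fun c => (c.1.line, c.2.line)) (fun c hc => ?_)
    fun c hc d hd heq => ?_
  · have hc := (mem_crossings.1 hc).1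
    exact Finset.mem_product.2 ⟨(mem_segments.1 hc.1).2.1, (mem_segments.1 hc.2).2.1⟩
  obtain ⟨⟨hc₁, hc₂⟩, hc⟩ := mem_crossings.1 hc
  obtain ⟨⟨hd₁, hd₂⟩, hd⟩ := mem_crossings.1 hd
  obtain ⟨heq₁, heq₂⟩ : c.1.line = d.1.line ∧ c.2.line = d.2.line := Prod.ext_iff.1 heq
  obtain ⟨s, hs, hs₁, hs₂⟩ := hc.exists_eval_eq
  obtain ⟨t, ht, ht₁, ht₂⟩ := hd.exists_eval_eq
  obtain rfl : s = t := by
    by_contra hst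
    exact hc.line_ne (NonverticalLine.eq_of_eval_eq hst hs (by rwa [heq₁, heq₂]))
  exact Prod.ext
    (graph.eq_of_line_eq hc₁ hd₁ heq₁ (hs₁.1.trans ht₁.2) (ht₁.1.trans hs₁.2))
    (graph.eq_of_line_eq hc₂ hd₂ heq₂ (hs₂.1.trans ht₂.2) (ht₂.1.trans hs₂.2))

theorem exists_segment_left_eq {L : Finset NonverticalLine} (hl : l ∈ L) {p q : ℝ × ℝ}
    (hp : p ∈ pointsOn P l) (hq : q ∈ pointsOn P l) (hpq : p.1 < q.1) :
    ∃ e ∈ segments P L, e.line = l ∧ e.left = p := by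
  classical
  obtain ⟨r, hr, hrmin⟩ := Finset.exists_min_image {r ∈ pointsOn P l | p.1 < r.1} Prod.fst
    ⟨q, Finset.mem_filter.2 ⟨hq, hpq⟩⟩
  obtain ⟨hrl, hpr⟩ := Finset.mem_filter.1 hr
  rw [mem_pointsOn] at hp hrl
  set e : Segment := ⟨p, r, hpr⟩
  have line_eq : e.line = l :=
    NonverticalLine.eq_of_dev_eq_zero hpr.ne e.line_dev_left e.line_dev_right hp.2 hrl.2
  refine ⟨e, mem_segments.2 ⟨⟨hp.1, hrl.1⟩, line_eq ▸ hl, fun w hw hpw hwr hdev => ?_⟩,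
    line_eq, rfl⟩
  exact (hrmin w (Finset.mem_filter.2 ⟨mem_pointsOn.2 ⟨hw, line_eq ▸ hdev⟩, hpw⟩)).not_gt hwr

open scoped Classical in
theorem card_pointsOn_le_card_segments {L : Finset NonverticalLine} (hl : l ∈ L) :
    (pointsOn P l).card ≤ ({e ∈ segments P L | e.line = l} : Finset Segment).card + 1 := by
  obtain hempty | hne := (pointsOn P l).eq_empty_or_nonempty
  · simp [hempty]
  obtain ⟨m, hm, hmax⟩ := Finset.exists_max_image _ Prod.fst hne
  have cover : pointsOn P l ⊆
      insert m (({e ∈ segments P L | e.line = l} : Finset Segment).image Segment.left) := by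
    intro p hp
    rcases (hmax p hp).lt_or_eq with hlt | heq
    · obtain ⟨e, he, hline, rfl⟩ := exists_segment_left_eq hl hp hm hlt
      exact Finset.mem_insert_of_mem (Finset.mem_image_of_mem _ (by simp [he, hline]))
    · exact Finset.mem_insert.2 (.inl (NonverticalLine.eq_of_fst_eq
        (mem_pointsOn.1 hp).2 (mem_pointsOn.1 hm).2 heq))
  exact (Finset.card_le_card cover).trans <| (Finset.card_insert_le _ _).trans <|
    Nat.succ_le_succ Finset.card_image_le

theorem card_mul_le_card_segments {L : Finset NonverticalLine} {k : ℕ}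
    (hk : ∀ l ∈ L, k ≤ (pointsOn P l).card) :
    L.card * k ≤ (segments P L).card + L.card := by
  classical
  rw [Finset.card_eq_sum_card_fiberwise (f := Segment.line) (t := L)
    fun e he => (mem_segments.1 he).2.1, Finset.card_eq_sum_ones L, ← Finset.sum_add_distrib,
    Finset.sum_mul]
  exact Finset.sum_le_sum fun l hl =>
    (one_mul k).le.trans ((hk l hl).trans (card_pointsOn_le_card_segments hl))

/-- The Szemerédi–Trotter bound on the number of `k`-rich lines. -/
theorem card_mul_pow_three_le {L : Finset NonverticalLine} {k : ℕ} (hk₂ : 2 ≤ k)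
    (hk : ∀ l ∈ L, k ≤ (pointsOn P l).card) :
    L.card * k ^ 3 ≤ 576 * P.card ^ 2 + 12 * P.card * k ^ 2 := by
  have edges : L.card * k ≤ 2 * (segments P L).card := by
    have := card_mul_le_card_segments hk
    nlinarith
  rcases le_total (6 * P.card) (segments P L).card with hmany | hfew
  · have crossing := (isGeometricGraph_segments P L).card_pow_three_le hmany
    have cubed := Nat.pow_le_pow_left edges 3
    have pairs := card_crossings_segments_le P L
    have : L.card ^ 2 * (L.card * k ^ 3) ≤ L.card ^ 2 * (576 * P.card ^ 2) := by
      nlinarith [Nat.mul_le_mul_left (P.card ^ 2) pairs]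
    obtain hzero | hpos := L.card.eq_zero_or_pos
    · simp [hzero]
    · exact (Nat.le_of_mul_le_mul_left this (by positivity)).trans (Nat.le_add_right _ _)
  · nlinarith [Nat.mul_le_mul_right (k ^ 2) (edges.trans (Nat.mul_le_mul_left 2 hfew))]

open scoped Classical in
theorem sum_card_mul_min_le_of_log_eq {L : Finset NonverticalLine} {i : ℕ}
    (hL : ∀ l ∈ L, 2 ≤ (pointsOn P l).card ∧ Nat.log 2 (pointsOn P l).card = i) :
    ∑ l ∈ L, (pointsOn P l).card * min ((pointsOn P l).card ^ 2) P.card ≤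
      4704 * P.card ^ 2 := by
  obtain rfl | ⟨l₀, hl₀⟩ := L.eq_empty_or_nonempty
  · simp
  have hi : 1 ≤ i := (hL l₀ hl₀).2 ▸ Nat.log_pos one_lt_two (hL l₀ hl₀).1
  set k := 2 ^ i with hk
  have hk₂ : 2 ≤ k := Nat.le_self_pow (by lia) 2
  have le_card (l) (hl : l ∈ L) : k ≤ (pointsOn P l).card := by
    rw [hk, ← (hL l hl).2]
    exact Nat.pow_log_le_self 2 (by have := (hL l hl).1; lia)
  have card_le (l) (hl : l ∈ L) : (pointsOn P l).card ≤ 2 * k := by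
    rw [hk, ← (hL l hl).2, ← pow_succ']
    exact (Nat.lt_pow_succ_log_self one_lt_two _).le
  have rich := card_mul_pow_three_le hk₂ le_card
  have sum_le : ∑ l ∈ L, (pointsOn P l).card * min ((pointsOn P l).card ^ 2) P.card ≤
      L.card * (2 * k * min ((2 * k) ^ 2) P.card) :=
    Finset.sum_le_card_nsmul _ _ _ fun l hl => by gcongr <;> exact card_le l hl
  refine sum_le.trans ?_
  rcases le_total (k ^ 2) P.card with hsmall | hlarge
  · calc L.card * (2 * k * min ((2 * k) ^ 2) P.card) ≤ L.card * (2 * k * (2 * k) ^ 2) := by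
          gcongr
          exact min_le_left _ _
      _ = 8 * (L.card * k ^ 3) := by ring
      _ ≤ 4704 * P.card ^ 2 := by nlinarith [Nat.mul_le_mul_left P.card hsmall]
  · refine Nat.le_of_mul_le_mul_right ?_ (show 0 < k ^ 2 by positivity)
    calc L.card * (2 * k * min ((2 * k) ^ 2) P.card) * k ^ 2
        ≤ L.card * (2 * k * P.card) * k ^ 2 := by
          gcongr
          exact min_le_right _ _
      _ = 2 * P.card * (L.card * k ^ 3) := by ring
      _ ≤ 2 * P.card * (576 * P.card ^ 2 + 12 * P.card * k ^ 2) := by gcongr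
      _ = 1152 * P.card ^ 2 * P.card + 24 * P.card ^ 2 * k ^ 2 := by ring
      _ ≤ 1152 * P.card ^ 2 * k ^ 2 + 24 * P.card ^ 2 * k ^ 2 := by gcongr
      _ ≤ 4704 * P.card ^ 2 * k ^ 2 := by nlinarith

theorem sum_card_mul_min_le {L : Finset NonverticalLine}
    (hL : ∀ l ∈ L, 2 ≤ (pointsOn P l).card) :
    ∑ l ∈ L, (pointsOn P l).card * min ((pointsOn P l).card ^ 2) P.card ≤
      4704 * P.card ^ 2 * (Nat.log 2 P.card + 1) := by
  classical
  rw [← Finset.sum_fiberwise_of_maps_to (t := Finset.range (Nat.log 2 P.card + 1))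
    (g := fun l => Nat.log 2 (pointsOn P l).card)
    fun l _ => Finset.mem_range.2 (Nat.lt_succ_of_le (Nat.log_mono_right (card_pointsOn_le P l)))]
  refine (Finset.sum_le_card_nsmul _ _ (4704 * P.card ^ 2) fun i _ =>
    sum_card_mul_min_le_of_log_eq (i := i) fun l hl => ?_).trans_eq ?_
  · exact ⟨hL l (Finset.mem_filter.1 hl).1, (Finset.mem_filter.1 hl).2⟩
  · rw [Finset.card_range, smul_eq_mul, mul_comm]

end SzemerediTrotter

/-! ### Right angles and additive energy -/

/-- The points `q`, `r`, `s` form a nondegenerate right angle with vertex `q`. -/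
def IsRightAngle (q r s : ℝ × ℝ) : Prop :=
  q ≠ r ∧ q ≠ s ∧ (r.1 - q.1) * (s.1 - q.1) + (r.2 - q.2) * (s.2 - q.2) = 0

open scoped Classical in
/-- The right angles spanned by `P`, as triples whose first entry is the vertex. -/
def rightAngles (P : Finset (ℝ × ℝ)) : Finset ((ℝ × ℝ) × (ℝ × ℝ) × (ℝ × ℝ)) :=
  {t ∈ P ×ˢ P ×ˢ P | IsRightAngle t.1 t.2.1 t.2.2}

section RightAngle

variable {P : Finset (ℝ × ℝ)} {q r s s' : ℝ × ℝ}

theorem mem_rightAngles :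
    (q, r, s) ∈ rightAngles P ↔ (q ∈ P ∧ r ∈ P ∧ s ∈ P) ∧ IsRightAngle q r s := by
  simp [rightAngles]

theorem IsRightAngle.symm (h : IsRightAngle q r s) : IsRightAngle q s r :=
  ⟨h.2.1, h.1, by linarith [h.2.2]⟩

theorem IsRightAngle.dev_through_eq_zero (h : IsRightAngle q r s) (h' : IsRightAngle q r s')
    (hr : q.1 ≠ r.1) (hs : q.1 ≠ s.1) : (NonverticalLine.through q s).dev s' = 0 := by
  have hr₀ : r.1 - q.1 ≠ 0 := sub_ne_zero.2 hr.symm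
  have hs₀ : s.1 - q.1 ≠ 0 := sub_ne_zero.2 hs.symm
  have collinear : (s.1 - q.1) * (s'.2 - q.2) - (s.2 - q.2) * (s'.1 - q.1) = 0 := by
    refine (mul_eq_zero.1 ?_).resolve_left hr₀
    linear_combination (s'.2 - q.2) * h.2.2 - (s.2 - q.2) * h'.2.2
  simp only [NonverticalLine.dev, NonverticalLine.eval, NonverticalLine.through]
  field_simp
  linear_combination collinear

theorem IsRightAngle.foot_eq {l : NonverticalLine} (h : IsRightAngle q r s)
    (hq : l.dev q = 0) (hr : l.dev r = 0) :
    (1 + l.slope ^ 2) * q.1 = s.1 + l.slope * (s.2 - l.intercept) := by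
  have hne : r.1 - q.1 ≠ 0 :=
    sub_ne_zero.2 fun heq => h.1 (NonverticalLine.eq_of_fst_eq hq hr heq.symm)
  obtain ⟨-, -, h⟩ := h
  simp only [NonverticalLine.dev, NonverticalLine.eval] at hq hr
  refine sub_eq_zero.1 ((mul_eq_zero.1 ?_).resolve_left hne)
  linear_combination -h + (s.2 - q.2) * (hr - hq) - (r.1 - q.1) * l.slope * hq

/-- The line carrying the first leg of a right angle `(q, r, s)`. -/
def firstLeg (t : (ℝ × ℝ) × (ℝ × ℝ) × (ℝ × ℝ)) : NonverticalLine := .through t.1 t.2.1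

/-- The line carrying the second leg of a right angle `(q, r, s)`. -/
def secondLeg (t : (ℝ × ℝ) × (ℝ × ℝ) × (ℝ × ℝ)) : NonverticalLine := .through t.1 t.2.2

open scoped Classical in
/-- The right angles spanned by `P` whose first leg is at least as rich as the second. -/
def rightAnglesRichFirst (P : Finset (ℝ × ℝ)) : Finset ((ℝ × ℝ) × (ℝ × ℝ) × (ℝ × ℝ)) :=
  {t ∈ rightAngles P | (pointsOn P (secondLeg t)).card ≤ (pointsOn P (firstLeg t)).card}

theorem mem_rightAnglesRichFirst {t : (ℝ × ℝ) × (ℝ × ℝ) × (ℝ × ℝ)} :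
    t ∈ rightAnglesRichFirst P ↔ ((t.1 ∈ P ∧ t.2.1 ∈ P ∧ t.2.2 ∈ P) ∧
      IsRightAngle t.1 t.2.1 t.2.2) ∧
      (pointsOn P (secondLeg t)).card ≤ (pointsOn P (firstLeg t)).card := by
  rw [rightAnglesRichFirst, Finset.mem_filter, ← mem_rightAngles]

theorem card_rightAngles_le_two_mul (P : Finset (ℝ × ℝ)) :
    (rightAngles P).card ≤ 2 * (rightAnglesRichFirst P).card := by
  classical
  have cover : rightAngles P ⊆ rightAnglesRichFirst P ∪
      (rightAnglesRichFirst P).image fun t => (t.1, t.2.2, t.2.1) := by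
    rintro ⟨q, r, s⟩ ht
    obtain ⟨⟨hq, hr, hs⟩, h⟩ := mem_rightAngles.1 ht
    rcases le_total (pointsOn P (secondLeg (q, r, s))).card
      (pointsOn P (firstLeg (q, r, s))).card with hle | hle
    · exact Finset.mem_union_left _ (mem_rightAnglesRichFirst.2 ⟨⟨⟨hq, hr, hs⟩, h⟩, hle⟩)
    · exact Finset.mem_union_right _ (Finset.mem_image.2
        ⟨(q, s, r), mem_rightAnglesRichFirst.2 ⟨⟨⟨hq, hs, hr⟩, h.symm⟩, hle⟩, rfl⟩)
  rw [two_mul]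
  exact (Finset.card_le_card cover).trans <|
    (Finset.card_union_le _ _).trans (Nat.add_le_add_left Finset.card_image_le _)

open scoped Classical in
/-- The right angles of `rightAnglesRichFirst P` whose first leg lies on a given line. -/
def rightAnglesWithFirstLeg (P : Finset (ℝ × ℝ)) (l : NonverticalLine) :
    Finset ((ℝ × ℝ) × (ℝ × ℝ) × (ℝ × ℝ)) :=
  {t ∈ rightAnglesRichFirst P | firstLeg t = l}

theorem mem_rightAnglesWithFirstLeg {l : NonverticalLine}
    {t : (ℝ × ℝ) × (ℝ × ℝ) × (ℝ × ℝ)} :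
    t ∈ rightAnglesWithFirstLeg P l ↔ t ∈ rightAnglesRichFirst P ∧ firstLeg t = l := by
  simp [rightAnglesWithFirstLeg]

theorem mem_pointsOn_firstLeg (hP : Set.InjOn Prod.fst (P : Set (ℝ × ℝ)))
    {t : (ℝ × ℝ) × (ℝ × ℝ) × (ℝ × ℝ)} (ht : t ∈ rightAnglesRichFirst P) :
    t.1 ∈ pointsOn P (firstLeg t) ∧ t.2.1 ∈ pointsOn P (firstLeg t) := by
  obtain ⟨⟨⟨hq, hr, -⟩, hqr, -⟩, -⟩ := mem_rightAnglesRichFirst.1 ht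
  exact ⟨mem_pointsOn.2 ⟨hq, NonverticalLine.dev_through_left _ _⟩,
    mem_pointsOn.2 ⟨hr, NonverticalLine.dev_through_right (hP.ne hq hr hqr)⟩⟩

theorem card_rightAnglesWithFirstLeg_le_mul (hP : Set.InjOn Prod.fst (P : Set (ℝ × ℝ)))
    (l : NonverticalLine) :
    (rightAnglesWithFirstLeg P l).card ≤ (pointsOn P l).card * P.card := by
  classical
  rw [← Finset.card_product]
  refine Finset.card_le_card_of_injOn Prod.snd (fun t ht => ?_) fun t ht t' ht' heq => ?_
  · obtain ⟨h, rfl⟩ := mem_rightAnglesWithFirstLeg.1 ht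
    exact Finset.mem_product.2
      ⟨(mem_pointsOn_firstLeg hP h).2, (mem_rightAnglesRichFirst.1 h).1.1.2.2⟩
  · obtain ⟨h, rfl⟩ := mem_rightAnglesWithFirstLeg.1 ht
    obtain ⟨h', hline⟩ := mem_rightAnglesWithFirstLeg.1 ht'
    obtain ⟨hq, hr⟩ := mem_pointsOn_firstLeg hP h
    obtain ⟨hq', hr'⟩ := mem_pointsOn_firstLeg hP h'
    rw [hline] at hq' hr'
    have foot := (mem_rightAnglesRichFirst.1 h).1.2.foot_eq (mem_pointsOn.1 hq).2
      (mem_pointsOn.1 hr).2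
    have foot' := (mem_rightAnglesRichFirst.1 h').1.2.foot_eq (mem_pointsOn.1 hq').2
      (mem_pointsOn.1 hr').2
    rw [← heq, ← foot] at foot'
    refine Prod.ext (hP (mem_pointsOn.1 hq).1 (mem_pointsOn.1 hq').1 ?_) heq
    exact (mul_left_cancel₀ (by positivity) foot').symm

open scoped Classical in
theorem card_filter_first_points_le (hP : Set.InjOn Prod.fst (P : Set (ℝ × ℝ)))
    {t₀ : (ℝ × ℝ) × (ℝ × ℝ) × (ℝ × ℝ)} (ht₀ : t₀ ∈ rightAnglesRichFirst P) :
    ({t ∈ rightAnglesRichFirst P | (t.1, t.2.1) = (t₀.1, t₀.2.1)} : Finset _).card ≤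
      (pointsOn P (firstLeg t₀)).card := by
  obtain ⟨⟨⟨hq, hr, hs₀⟩, h₀⟩, hle⟩ := mem_rightAnglesRichFirst.1 ht₀
  refine le_trans (Finset.card_le_card_of_injOn (fun t => t.2.2) (fun t ht => ?_)
    fun t ht t' ht' heq => ?_) hle
  · obtain ⟨htR, heq⟩ := Finset.mem_filter.1 ht
    obtain ⟨hq_eq, hr_eq⟩ := Prod.mk.inj heq
    obtain ⟨⟨⟨-, -, hs⟩, h⟩, -⟩ := mem_rightAnglesRichFirst.1 htR
    rw [hq_eq, hr_eq] at h
    exact mem_pointsOn.2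
      ⟨hs, h₀.dev_through_eq_zero h (hP.ne hq hr h₀.1) (hP.ne hq hs₀ h₀.2.1)⟩
  · obtain ⟨hfst, hsnd⟩ :=
      Prod.mk.inj ((Finset.mem_filter.1 ht).2.trans (Finset.mem_filter.1 ht').2.symm)
    exact Prod.ext hfst (Prod.ext hsnd heq)

theorem card_rightAnglesWithFirstLeg_le_pow (hP : Set.InjOn Prod.fst (P : Set (ℝ × ℝ)))
    (l : NonverticalLine) :
    (rightAnglesWithFirstLeg P l).card ≤ (pointsOn P l).card ^ 3 := by
  classical
  have maps : ∀ t ∈ rightAnglesWithFirstLeg P l,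
      (t.1, t.2.1) ∈ pointsOn P l ×ˢ pointsOn P l := fun t ht => by
    obtain ⟨h, rfl⟩ := mem_rightAnglesWithFirstLeg.1 ht
    exact Finset.mem_product.2 (mem_pointsOn_firstLeg hP h)
  refine (Finset.card_le_mul_card_image_of_maps_to maps (pointsOn P l).card ?_).trans_eq
    (by rw [Finset.card_product]; ring)
  rintro ⟨q, r⟩ -
  obtain hempty | ⟨t₀, ht₀⟩ :=
    ({t ∈ rightAnglesWithFirstLeg P l | (t.1, t.2.1) = (q, r)} : Finset _).eq_empty_or_nonempty
  · rw [hempty, Finset.card_empty]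
    exact Nat.zero_le _
  obtain ⟨ht₀l, ht₀_eq⟩ := Finset.mem_filter.1 ht₀
  obtain ⟨ht₀R, rfl⟩ := mem_rightAnglesWithFirstLeg.1 ht₀l
  rw [← ht₀_eq]
  exact (Finset.card_le_card (Finset.filter_subset_filter _ (Finset.filter_subset _ _))).trans
    (card_filter_first_points_le hP ht₀R)

theorem card_rightAngles_le_of_injOn (hP : Set.InjOn Prod.fst (P : Set (ℝ × ℝ))) :
    (rightAngles P).card ≤ 9408 * P.card ^ 2 * (Nat.log 2 P.card + 1) := by
  classical
  set L := (rightAnglesRichFirst P).image firstLeg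
  have two_le : ∀ l ∈ L, 2 ≤ (pointsOn P l).card := by
    intro l hl
    obtain ⟨t, ht, rfl⟩ := Finset.mem_image.1 hl
    obtain ⟨hq, hr⟩ := mem_pointsOn_firstLeg hP ht
    exact Finset.one_lt_card.2 ⟨_, hq, _, hr, (mem_rightAnglesRichFirst.1 ht).1.2.1⟩
  have rich_le : (rightAnglesRichFirst P).card ≤ 4704 * P.card ^ 2 * (Nat.log 2 P.card + 1) := by
    rw [Finset.card_eq_sum_card_image firstLeg]
    refine (Finset.sum_le_sum fun l _ => ?_).trans (sum_card_mul_min_le two_le)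
    rw [← Nat.mul_min_mul_left, ← pow_succ']
    exact le_min (card_rightAnglesWithFirstLeg_le_pow hP l)
      (card_rightAnglesWithFirstLeg_le_mul hP l)
  linarith [card_rightAngles_le_two_mul P]

theorem exists_injOn_fst_sub_mul_snd (P : Finset (ℝ × ℝ)) :
    ∃ t : ℝ, Set.InjOn (fun p : ℝ × ℝ => p.1 - t * p.2) P := by
  classical
  obtain ⟨t, ht⟩ := Infinite.exists_notMem_finset
    ((P ×ˢ P).image fun c => (c.1.1 - c.2.1) / (c.1.2 - c.2.2))
  refine ⟨t, fun p hp q hq (hpq : p.1 - t * p.2 = q.1 - t * q.2) => ?_⟩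
  have hsnd : p.2 = q.2 := by
    by_contra hne
    refine ht (Finset.mem_image.2 ⟨(p, q), Finset.mk_mem_product hp hq, ?_⟩)
    rw [div_eq_iff (sub_ne_zero.2 hne)]
    linarith
  exact Prod.ext (by rw [hsnd] at hpq; linarith) hsnd

/-- A generic similarity makes all abscissae distinct and preserves right angles. -/
theorem card_rightAngles_le (P : Finset (ℝ × ℝ)) :
    (rightAngles P).card ≤ 9408 * P.card ^ 2 * (Nat.log 2 P.card + 1) := by
  classical
  obtain ⟨t, ht⟩ := exists_injOn_fst_sub_mul_snd P
  set φ : ℝ × ℝ → ℝ × ℝ := fun p => (p.1 - t * p.2, t * p.1 + p.2) with hφ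
  have inj : Set.InjOn φ P := fun p hp q hq h => ht hp hq (congrArg Prod.fst h)
  have fst_inj : Set.InjOn Prod.fst ((P.image φ : Finset (ℝ × ℝ)) : Set (ℝ × ℝ)) := by
    rw [Finset.coe_image]
    rintro _ ⟨p, hp, rfl⟩ _ ⟨q, hq, rfl⟩ h
    rw [ht hp hq h]
  refine le_trans (Finset.card_le_card_of_injOn (fun c => (φ c.1, φ c.2.1, φ c.2.2)) ?_ ?_)
    ((card_rightAngles_le_of_injOn fst_inj).trans_eq (by rw [Finset.card_image_of_injOn inj]))
  · rintro ⟨q, r, s⟩ h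
    obtain ⟨⟨hq, hr, hs⟩, hqr, hqs, hdot⟩ := mem_rightAngles.1 h
    refine mem_rightAngles.2 ⟨⟨Finset.mem_image_of_mem φ hq, Finset.mem_image_of_mem φ hr,
      Finset.mem_image_of_mem φ hs⟩, inj.ne hq hr hqr, inj.ne hq hs hqs, ?_⟩
    simp only [hφ]
    linear_combination (1 + t ^ 2) * hdot
  · rintro ⟨q, r, s⟩ h ⟨q', r', s'⟩ h' heq
    obtain ⟨⟨hq, hr, hs⟩, -⟩ := mem_rightAngles.1 h
    obtain ⟨⟨hq', hr', hs'⟩, -⟩ := mem_rightAngles.1 h'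
    simp only [Prod.mk.injEq] at heq ⊢
    exact ⟨inj hq hq' heq.1, inj hr hr' heq.2.1, inj hs hs' heq.2.2⟩

end RightAngle

/-- The full elliptic paraboloid in `ℝ³`. -/
def ellipticParaboloid : Set (EuclideanSpace ℝ (Fin 3)) := {x | x 2 = x 0 ^ 2 + x 1 ^ 2}

/-- The orthogonal projection to the horizontal coordinate plane. -/
def horizontalPart (x : EuclideanSpace ℝ (Fin 3)) : ℝ × ℝ := (x 0, x 1)

theorem injOn_horizontalPart : Set.InjOn horizontalPart ellipticParaboloid := by
  intro x hx y hy h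
  obtain ⟨h₀, h₁⟩ : x 0 = y 0 ∧ x 1 = y 1 := Prod.ext_iff.1 h
  have h₂ : x 2 = y 2 := by rw [hx, hy, h₀, h₁]
  ext i
  fin_cases i <;> assumption

theorem isRightAngle_of_add_eq_add {p q r s : EuclideanSpace ℝ (Fin 3)}
    (hp : p ∈ ellipticParaboloid) (hq : q ∈ ellipticParaboloid) (hr : r ∈ ellipticParaboloid)
    (hs : s ∈ ellipticParaboloid) (hadd : p + q = r + s) (hpr : p ≠ r) (hps : p ≠ s) :
    IsRightAngle (horizontalPart p) (horizontalPart r) (horizontalPart s) := by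
  have coord (i : Fin 3) : p i + q i = r i + s i := by
    simpa using congrArg (fun v : EuclideanSpace ℝ (Fin 3) => v i) hadd
  have height := coord 2
  rw [hp, hq, hr, hs] at height
  refine ⟨injOn_horizontalPart.ne hp hr hpr, injOn_horizontalPart.ne hp hs hps, ?_⟩
  simp only [horizontalPart]
  rw [eq_sub_of_add_eq' (coord 0), eq_sub_of_add_eq' (coord 1)] at height
  linear_combination height / 2

open scoped Classical in
/-- The additive quadruples `p + q = r + s` in `A` with `p ∉ {r, s}`, encoded as
`((p, r), (q, s))` like those counted by `Finset.addEnergy`. -/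
def properAddQuadruples {G : Type*} [Add G] (A : Finset G) : Finset ((G × G) × G × G) :=
  {t ∈ (A ×ˢ A) ×ˢ A ×ˢ A | t.1.1 + t.2.1 = t.1.2 + t.2.2 ∧ t.1.1 ≠ t.1.2 ∧ t.1.1 ≠ t.2.2}

theorem mem_properAddQuadruples {G : Type*} [Add G] {A : Finset G} {p q r s : G} :
    ((p, r), (q, s)) ∈ properAddQuadruples A ↔
      ((p ∈ A ∧ r ∈ A) ∧ q ∈ A ∧ s ∈ A) ∧ p + q = r + s ∧ p ≠ r ∧ p ≠ s := by
  simp [properAddQuadruples]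

theorem addEnergy_le_card_properAddQuadruples_add {G : Type*} [DecidableEq G]
    [AddCancelCommMonoid G] (A : Finset G) :
    A.addEnergy A ≤ (properAddQuadruples A).card + 2 * A.card ^ 2 := by
  classical
  set D : Finset ((G × G) × G × G) := (A ×ˢ A).image fun c => ((c.1, c.1), (c.2, c.2))
  set D' : Finset ((G × G) × G × G) := (A ×ˢ A).image fun c => ((c.1, c.2), (c.2, c.1))
  have cover : {t ∈ (A ×ˢ A) ×ˢ A ×ˢ A | t.1.1 + t.2.1 = t.1.2 + t.2.2} ⊆
      properAddQuadruples A ∪ (D ∪ D') := by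
    rintro ⟨⟨p, r⟩, ⟨q, s⟩⟩ ht
    simp only [Finset.mem_filter, Finset.mem_product] at ht
    simp only [Finset.mem_union, mem_properAddQuadruples]
    obtain ⟨mem, hadd⟩ := ht
    by_cases hpr : p = r
    · obtain rfl : q = s := by simpa [hpr] using hadd
      exact .inr (.inl (Finset.mem_image.2 ⟨(p, q), by simp [mem], by simp [hpr]⟩))
    by_cases hps : p = s
    · obtain rfl : q = r := by simpa [hps, add_comm r] using hadd
      exact .inr (.inr (Finset.mem_image.2 ⟨(p, q), by simp [mem], by simp [hps]⟩))
    exact .inl ⟨mem, hadd, hpr, hps⟩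
  have card_D : D.card ≤ A.card ^ 2 :=
    Finset.card_image_le.trans_eq (by rw [Finset.card_product, sq])
  have card_D' : D'.card ≤ A.card ^ 2 :=
    Finset.card_image_le.trans_eq (by rw [Finset.card_product, sq])
  refine (Finset.card_le_card cover).trans ((Finset.card_union_le _ _).trans ?_)
  linarith [Finset.card_union_le D D']

open scoped Classical in
theorem card_properAddQuadruples_le {A : Finset (EuclideanSpace ℝ (Fin 3))}
    (hA : ↑A ⊆ ellipticParaboloid) :
    (properAddQuadruples A).card ≤ (rightAngles (A.image horizontalPart)).card := by
  have inj := injOn_horizontalPart.mono hA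
  refine Finset.card_le_card_of_injOn (fun t =>
    (horizontalPart t.1.1, horizontalPart t.1.2, horizontalPart t.2.2)) ?_ ?_
  · rintro ⟨⟨p, r⟩, ⟨q, s⟩⟩ ht
    obtain ⟨⟨⟨hp, hr⟩, hq, hs⟩, hadd, hpr, hps⟩ := mem_properAddQuadruples.1 ht
    exact mem_rightAngles.2 ⟨⟨Finset.mem_image_of_mem _ hp, Finset.mem_image_of_mem _ hr,
      Finset.mem_image_of_mem _ hs⟩,
      isRightAngle_of_add_eq_add (hA hp) (hA hq) (hA hr) (hA hs) hadd hpr hps⟩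
  · rintro ⟨⟨p, r⟩, ⟨q, s⟩⟩ ht ⟨⟨p', r'⟩, ⟨q', s'⟩⟩ ht' heq
    obtain ⟨⟨⟨hp, hr⟩, -, hs⟩, hadd, -⟩ := mem_properAddQuadruples.1 ht
    obtain ⟨⟨⟨hp', hr'⟩, -, hs'⟩, hadd', -⟩ := mem_properAddQuadruples.1 ht'
    simp only [Prod.mk.injEq] at heq
    obtain rfl := inj hp hp' heq.1
    obtain rfl := inj hr hr' heq.2.1
    obtain rfl := inj hs hs' heq.2.2
    obtain rfl : q = q' := add_left_cancel (hadd.trans hadd'.symm)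
    rfl

theorem addEnergy_le_of_subset_ellipticParaboloid
    {A : Finset (EuclideanSpace ℝ (Fin 3))} (hA : ↑A ⊆ ellipticParaboloid) :
    A.addEnergy A ≤ 9410 * A.card ^ 2 * (Nat.log 2 A.card + 1) := by
  classical
  have card_angles := card_rightAngles_le (A.image horizontalPart)
  rw [Finset.card_image_of_injOn (injOn_horizontalPart.mono hA)] at card_angles
  calc A.addEnergy A ≤ (properAddQuadruples A).card + 2 * A.card ^ 2 :=
        addEnergy_le_card_properAddQuadruples_add A
    _ ≤ 9408 * A.card ^ 2 * (Nat.log 2 A.card + 1) + 2 * A.card ^ 2 :=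
        Nat.add_le_add_right ((card_properAddQuadruples_le hA).trans card_angles) _
    _ ≤ 9410 * A.card ^ 2 * (Nat.log 2 A.card + 1) := by
        linarith [Nat.zero_le (A.card ^ 2 * Nat.log 2 A.card)]

/-! ### Fourth moments of exponential sums -/

theorem norm_ee (t : ℝ) : ‖ee t‖ = 1 := by
  rw [ee, show (2 * π * Complex.I * t : ℂ) = ((2 * π * t : ℝ) : ℂ) * Complex.I by push_cast; ring]
  exact Complex.norm_exp_ofReal_mul_I _

theorem ee_add (s t : ℝ) : ee (s + t) = ee s * ee t := by
  rw [ee, ee, ee, ← Complex.exp_add]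
  push_cast
  ring_nf

theorem ee_neg (t : ℝ) : ee (-t) = starRingEnd ℂ (ee t) := by
  rw [ee, ee, ← Complex.exp_conj]
  simp [Complex.conj_ofNat]

theorem continuous_ee : Continuous ee := by
  unfold ee
  fun_prop

theorem coe_fourierChar (t : ℝ) : (Real.fourierChar t : ℂ) = ee t := by
  rw [Real.fourierChar_apply, ee]
  push_cast
  ring_nf

section WeightedEnergy

variable {V : Type*}

/-- The coefficient of a quadruple in the expansion of the fourth power of an exponential sum. -/
def quadrupleCoeff (a : V → ℂ) (t : (V × V) × V × V) : ℂ :=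
  a t.1.1 * starRingEnd ℂ (a t.1.2) * (a t.2.1 * starRingEnd ℂ (a t.2.2))

theorem norm_quadrupleCoeff (a : V → ℂ) (t : (V × V) × V × V) :
    ‖quadrupleCoeff a t‖ = ‖a t.1.1‖ * ‖a t.1.2‖ * (‖a t.2.1‖ * ‖a t.2.2‖) := by
  simp [quadrupleCoeff]

theorem sum_norm_quadrupleCoeff (A : Finset V) (a : V → ℂ) :
    ∑ t ∈ (A ×ˢ A) ×ˢ A ×ˢ A, ‖quadrupleCoeff a t‖ = (∑ ξ ∈ A, ‖a ξ‖) ^ 4 := by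
  simp only [norm_quadrupleCoeff]
  rw [Finset.sum_product' (f := fun c d : V × V => ‖a c.1‖ * ‖a c.2‖ * (‖a d.1‖ * ‖a d.2‖)),
    ← Finset.sum_mul_sum, Finset.sum_product' (f := fun p r => ‖a p‖ * ‖a r‖),
    ← Finset.sum_mul_sum]
  ring

/-- The additive energy of `A` in which each point `ξ` is counted with weight `‖a ξ‖`. -/
def weightedEnergy [Add V] [DecidableEq V] (A : Finset V) (a : V → ℂ) : ℝ :=
  ∑ t ∈ (A ×ˢ A) ×ˢ A ×ˢ A with t.1.1 + t.2.1 = t.1.2 + t.2.2, ‖quadrupleCoeff a t‖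

variable [Add V] [DecidableEq V] {A : Finset V} {a : V → ℂ} {M : ℝ}

theorem weightedEnergy_le_addEnergy_mul (h : ∀ ξ ∈ A, ‖a ξ‖ ≤ M) :
    weightedEnergy A a ≤ A.addEnergy A * M ^ 4 := by
  rw [← nsmul_eq_mul]
  refine Finset.sum_le_card_nsmul _ _ _ fun t ht => ?_
  simp only [Finset.mem_filter, Finset.mem_product] at ht
  obtain ⟨⟨⟨hp, hr⟩, hq, hs⟩, -⟩ := ht
  have hM : 0 ≤ M := (norm_nonneg _).trans (h _ hp)
  calc ‖quadrupleCoeff a t‖ = ‖a t.1.1‖ * ‖a t.1.2‖ * (‖a t.2.1‖ * ‖a t.2.2‖) :=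
        norm_quadrupleCoeff a t
    _ ≤ M * M * (M * M) := by gcongr <;> exact h _ ‹_›
    _ = M ^ 4 := by ring

theorem weightedEnergy_le_of_balanced {E : ℕ} (hE : A.addEnergy A ≤ E * A.card ^ 2) (hM : 0 ≤ M)
    (hle : ∀ ξ ∈ A, ‖a ξ‖ ≤ M) (hge : ∀ ξ ∈ A, M ≤ 2 * ‖a ξ‖) :
    weightedEnergy A a ≤ 16 * E * (∑ ξ ∈ A, ‖a ξ‖ ^ 2) ^ 2 := by
  have mass : A.card * M ^ 2 ≤ 4 * ∑ ξ ∈ A, ‖a ξ‖ ^ 2 := by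
    rw [← nsmul_eq_mul, Finset.mul_sum]
    refine Finset.card_nsmul_le_sum _ _ _ fun ξ hξ => ?_
    calc M ^ 2 ≤ (2 * ‖a ξ‖) ^ 2 := by gcongr; exact hge ξ hξ
      _ = 4 * ‖a ξ‖ ^ 2 := by ring
  calc weightedEnergy A a ≤ A.addEnergy A * M ^ 4 := weightedEnergy_le_addEnergy_mul hle
    _ ≤ (E * A.card ^ 2) * M ^ 4 := by gcongr; exact_mod_cast hE
    _ = E * (A.card * M ^ 2) ^ 2 := by ring
    _ ≤ E * (4 * ∑ ξ ∈ A, ‖a ξ‖ ^ 2) ^ 2 := by gcongr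
    _ = 16 * E * (∑ ξ ∈ A, ‖a ξ‖ ^ 2) ^ 2 := by ring

theorem weightedEnergy_le_card_mul_pow_four (h : ∀ ξ ∈ A, ‖a ξ‖ ≤ M) :
    weightedEnergy A a ≤ (A.card * M) ^ 4 :=
  calc weightedEnergy A a ≤ ∑ t ∈ (A ×ˢ A) ×ˢ A ×ˢ A, ‖quadrupleCoeff a t‖ :=
        Finset.sum_le_sum_of_subset_of_nonneg (Finset.filter_subset _ _) fun _ _ _ => norm_nonneg _
    _ = (∑ ξ ∈ A, ‖a ξ‖) ^ 4 := sum_norm_quadrupleCoeff A a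
    _ ≤ (A.card * M) ^ 4 := by
        gcongr
        rw [← nsmul_eq_mul]
        exact Finset.sum_le_card_nsmul _ _ _ h

theorem exists_dyadic_level {t σ : ℝ} (h : t ≤ σ) (J : ℕ) :
    ∃ j ≤ J, t ≤ σ / 2 ^ j ∧ (j < J → σ / 2 ^ j ≤ 2 * t) := by
  induction J with
  | zero => exact ⟨0, le_rfl, by simpa using h, fun h0 => absurd h0 (lt_irrefl 0)⟩
  | succ J ih =>
    by_cases hsmall : t ≤ σ / 2 ^ (J + 1)
    · exact ⟨J + 1, le_rfl, hsmall, fun h0 => absurd h0 (lt_irrefl _)⟩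
    obtain ⟨j, hj, hle, hge⟩ := ih
    refine ⟨j, hj.trans J.le_succ, hle, fun _ => ?_⟩
    obtain hlt | rfl := hj.lt_or_eq
    · exact hge hlt
    · rw [pow_succ, ← div_div] at hsmall
      linarith

theorem weightedEnergy_le_of_dyadic_level {E j J : ℕ} {σ : ℝ}
    (hE : A.addEnergy A ≤ E * A.card ^ 2) (hσ : 0 ≤ σ) (mass : ∑ ξ ∈ A, ‖a ξ‖ ^ 2 ≤ σ ^ 2)
    (hcard : (A.card : ℝ) ≤ 2 ^ J) (hj : j ≤ J) (hle : ∀ ξ ∈ A, ‖a ξ‖ ≤ σ / 2 ^ j)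
    (hge : j < J → ∀ ξ ∈ A, σ / 2 ^ j ≤ 2 * ‖a ξ‖) :
    weightedEnergy A a ≤ (16 * E + 1) * σ ^ 4 := by
  obtain hlt | rfl := hj.lt_or_eq
  · calc weightedEnergy A a ≤ 16 * E * (∑ ξ ∈ A, ‖a ξ‖ ^ 2) ^ 2 :=
          weightedEnergy_le_of_balanced hE (by positivity) hle (hge hlt)
      _ ≤ 16 * E * (σ ^ 2) ^ 2 := by gcongr
      _ ≤ (16 * E + 1) * σ ^ 4 := by linarith [pow_nonneg hσ 4]
  · calc weightedEnergy A a ≤ (A.card * (σ / 2 ^ j)) ^ 4 := weightedEnergy_le_card_mul_pow_four hle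
      _ ≤ (2 ^ j * (σ / 2 ^ j)) ^ 4 := by gcongr
      _ = 1 * σ ^ 4 := by rw [mul_div_cancel₀ _ (by positivity), one_mul]
      _ ≤ (16 * E + 1) * σ ^ 4 := by gcongr; simp

end WeightedEnergy

section ExpSum

variable {V : Type*} [NormedAddCommGroup V] [InnerProductSpace ℝ V]

/-- The exponential sum with frequencies in `A` and coefficients `a`. -/
def expSum (A : Finset V) (a : V → ℂ) (x : V) : ℂ := ∑ ξ ∈ A, a ξ * ee ⟪ξ, x⟫

/-- The frequency `p - r + (q - s)` of a quadruple encoded as `((p, r), (q, s))`. -/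
def alternatingSum (t : (V × V) × V × V) : V := t.1.1 - t.1.2 + (t.2.1 - t.2.2)

theorem sq_norm_expSum (A : Finset V) (a : V → ℂ) (x : V) :
    (‖expSum A a x‖ ^ 2 : ℂ) =
      ∑ c ∈ A ×ˢ A, a c.1 * starRingEnd ℂ (a c.2) * ee ⟪c.1 - c.2, x⟫ := by
  rw [← Complex.mul_conj', expSum, map_sum, Finset.sum_mul_sum, ← Finset.sum_product']
  refine Finset.sum_congr rfl fun c _ => ?_
  rw [inner_sub_left, sub_eq_add_neg, ee_add, ee_neg, map_mul]
  ring

theorem norm_expSum_pow_four (A : Finset V) (a : V → ℂ) (x : V) :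
    (‖expSum A a x‖ ^ 4 : ℂ) =
      ∑ t ∈ (A ×ˢ A) ×ˢ A ×ˢ A, quadrupleCoeff a t * ee ⟪alternatingSum t, x⟫ := by
  rw [show (‖expSum A a x‖ ^ 4 : ℂ) = (‖expSum A a x‖ ^ 2 : ℂ) * (‖expSum A a x‖ ^ 2 : ℂ) by ring,
    sq_norm_expSum, Finset.sum_mul_sum, ← Finset.sum_product']
  refine Finset.sum_congr rfl fun t _ => ?_
  rw [quadrupleCoeff, alternatingSum, inner_add_left, ee_add]
  ring

theorem continuous_ee_inner (v : V) : Continuous fun x : V => ee ⟪v, x⟫ :=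
  continuous_ee.comp (by fun_prop)

variable [MeasurableSpace V] {μ : Measure V} {A B : Finset V} {a : V → ℂ}

/-- The measure `μ` almost annihilates every nonzero frequency in the expansion of the fourth power
of an exponential sum over `A`. The factor `|A|²` compensates for the number of terms. -/
def IsAlmostDecorrelating (μ : Measure V) (A : Finset V) : Prop :=
  ∀ t ∈ (A ×ˢ A) ×ˢ A ×ˢ A, alternatingSum t ≠ 0 →
    ‖∫ x, ee ⟪alternatingSum t, x⟫ ∂μ‖ * A.card ^ 2 ≤ 1

theorem IsAlmostDecorrelating.mono (h : IsAlmostDecorrelating μ A) (hBA : B ⊆ A) :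
    IsAlmostDecorrelating μ B := fun t ht hne => by
  have ht' : t ∈ (A ×ˢ A) ×ˢ A ×ˢ A := by
    simp only [Finset.mem_product] at ht ⊢
    exact ⟨⟨hBA ht.1.1, hBA ht.1.2⟩, hBA ht.2.1, hBA ht.2.2⟩
  refine le_trans ?_ (h t ht' hne)
  gcongr

variable [BorelSpace V]

theorem integrable_ee_inner [IsFiniteMeasure μ] (v : V) : Integrable (fun x => ee ⟪v, x⟫) μ :=
  .of_bound (continuous_ee_inner v).aestronglyMeasurable 1 (.of_forall fun _ => (norm_ee _).le)

theorem integrable_norm_expSum_pow_four [IsFiniteMeasure μ] (A : Finset V) (a : V → ℂ) :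
    Integrable (fun x => ‖expSum A a x‖ ^ 4) μ := by
  have continuous_expSum : Continuous (expSum A a) :=
    continuous_finsetSum _ fun ξ _ => continuous_const.mul (continuous_ee_inner ξ)
  refine .of_bound (continuous_expSum.norm.pow 4).aestronglyMeasurable ((∑ ξ ∈ A, ‖a ξ‖) ^ 4)
    (.of_forall fun x => ?_)
  rw [norm_pow, norm_norm]
  gcongr
  exact (norm_sum_le _ _).trans_eq (by simp [norm_ee])

theorem integral_norm_expSum_pow_four_le_sum [IsFiniteMeasure μ] (A : Finset V) (a : V → ℂ) :
    ∫ x, ‖expSum A a x‖ ^ 4 ∂μ ≤ ∑ t ∈ (A ×ˢ A) ×ˢ A ×ˢ A,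
      ‖quadrupleCoeff a t‖ * ‖∫ x, ee ⟪alternatingSum t, x⟫ ∂μ‖ := by
  have expansion : ((∫ x, ‖expSum A a x‖ ^ 4 ∂μ : ℝ) : ℂ) = ∑ t ∈ (A ×ˢ A) ×ˢ A ×ˢ A,
      quadrupleCoeff a t * ∫ x, ee ⟪alternatingSum t, x⟫ ∂μ := by
    simp only [← integral_complex_ofReal, ← integral_const_mul]
    rw [← integral_finsetSum _ fun t _ => (integrable_ee_inner _).const_mul _]
    congr 1 with x
    rw [← norm_expSum_pow_four]
    push_cast
    rfl
  calc ∫ x, ‖expSum A a x‖ ^ 4 ∂μ ≤ ‖((∫ x, ‖expSum A a x‖ ^ 4 ∂μ : ℝ) : ℂ)‖ := by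
        rw [Complex.norm_real]
        exact le_norm_self _
    _ ≤ _ := by
        rw [expansion]
        exact (norm_sum_le _ _).trans_eq (by simp only [norm_mul])

theorem integral_norm_expSum_pow_four_le [DecidableEq V] [IsProbabilityMeasure μ]
    (h : IsAlmostDecorrelating μ A) :
    ∫ x, ‖expSum A a x‖ ^ 4 ∂μ ≤ weightedEnergy A a + (∑ ξ ∈ A, ‖a ξ‖ ^ 2) ^ 2 := by
  set s := ∑ ξ ∈ A, ‖a ξ‖ ^ 2
  obtain rfl | hA := A.eq_empty_or_nonempty
  · simp [expSum, weightedEnergy, s]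
  have card_pos : (0 : ℝ) < A.card ^ 2 := by exact_mod_cast pow_pos hA.card_pos 2
  have cauchy_schwarz : (∑ ξ ∈ A, ‖a ξ‖) ^ 4 ≤ A.card ^ 2 * s ^ 2 :=
    calc (∑ ξ ∈ A, ‖a ξ‖) ^ 4 = ((∑ ξ ∈ A, ‖a ξ‖) ^ 2) ^ 2 := by ring
      _ ≤ (A.card * s) ^ 2 := by gcongr; exact sq_sum_le_card_mul_sum_sq
      _ = A.card ^ 2 * s ^ 2 := by ring
  have term_le : ∀ t ∈ (A ×ˢ A) ×ˢ A ×ˢ A,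
      ‖quadrupleCoeff a t‖ * ‖∫ x, ee ⟪alternatingSum t, x⟫ ∂μ‖ ≤
        (if t.1.1 + t.2.1 = t.1.2 + t.2.2 then ‖quadrupleCoeff a t‖ else 0) +
          ‖quadrupleCoeff a t‖ / A.card ^ 2 := by
    intro t ht
    split_ifs with hadd
    · have le_one : ‖∫ x, ee ⟪alternatingSum t, x⟫ ∂μ‖ ≤ 1 := by
        simpa using norm_integral_le_of_norm_le_const (μ := μ) (C := 1)
          (.of_forall fun x => (norm_ee ⟪alternatingSum t, x⟫).le)
      exact (mul_le_of_le_one_right (norm_nonneg _) le_one).trans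
        (le_add_of_nonneg_right (by positivity))
    · have alternatingSum_ne_zero : alternatingSum t ≠ 0 := fun h0 => hadd <| by
        rw [alternatingSum, sub_add_sub_comm, sub_eq_zero] at h0
        exact h0
      rw [zero_add, div_eq_mul_one_div]
      gcongr
      exact (le_div_iff₀ card_pos).2 (h t ht alternatingSum_ne_zero)
  refine (integral_norm_expSum_pow_four_le_sum A a).trans ((Finset.sum_le_sum term_le).trans ?_)
  rw [Finset.sum_add_distrib, ← Finset.sum_filter, ← Finset.sum_div, sum_norm_quadrupleCoeff]
  exact add_le_add_right ((div_le_iff₀' card_pos).2 cauchy_schwarz) _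

theorem integral_norm_expSum_pow_four_le_sum_fiberwise {ι : Type*} [DecidableEq ι]
    [IsFiniteMeasure μ] {T : Finset ι} {level : V → ι} (hT : T.Nonempty)
    (maps : ∀ ξ ∈ A, level ξ ∈ T) :
    ∫ x, ‖expSum A a x‖ ^ 4 ∂μ ≤
      T.card ^ 3 * ∑ i ∈ T, ∫ x, ‖expSum {ξ ∈ A | level ξ = i} a x‖ ^ 4 ∂μ := by
  rw [← integral_finsetSum _ fun i _ => integrable_norm_expSum_pow_four _ a,
    ← integral_const_mul]
  refine integral_mono (integrable_norm_expSum_pow_four A a)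
    ((integrable_finsetSum _ fun i _ => integrable_norm_expSum_pow_four _ a).const_mul _)
    fun x => ?_
  have card_pos : (0 : ℝ) < T.card ^ 3 := by exact_mod_cast pow_pos hT.card_pos 3
  have split : expSum A a x = ∑ i ∈ T, expSum {ξ ∈ A | level ξ = i} a x :=
    (Finset.sum_fiberwise_of_maps_to maps _).symm
  calc ‖expSum A a x‖ ^ 4 ≤ (∑ i ∈ T, ‖expSum {ξ ∈ A | level ξ = i} a x‖) ^ 4 := by
        rw [split]
        gcongr
        exact norm_sum_le _ _
    _ ≤ T.card ^ 3 * ∑ i ∈ T, ‖expSum {ξ ∈ A | level ξ = i} a x‖ ^ 4 :=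
        (div_le_iff₀' card_pos).1 (pow_sum_div_card_le_sum_pow (fun _ _ => norm_nonneg _) 3)

theorem integral_norm_expSum_pow_four_le_of_dyadic_level [DecidableEq V] [IsProbabilityMeasure μ]
    {E j J : ℕ} {σ : ℝ} (h : IsAlmostDecorrelating μ B) (hE : B.addEnergy B ≤ E * B.card ^ 2)
    (hσ : 0 ≤ σ) (mass : ∑ ξ ∈ B, ‖a ξ‖ ^ 2 ≤ σ ^ 2) (hcard : (B.card : ℝ) ≤ 2 ^ J) (hj : j ≤ J)
    (hle : ∀ ξ ∈ B, ‖a ξ‖ ≤ σ / 2 ^ j) (hge : j < J → ∀ ξ ∈ B, σ / 2 ^ j ≤ 2 * ‖a ξ‖) :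
    ∫ x, ‖expSum B a x‖ ^ 4 ∂μ ≤ (16 * E + 2) * σ ^ 4 :=
  calc ∫ x, ‖expSum B a x‖ ^ 4 ∂μ ≤ weightedEnergy B a + (∑ ξ ∈ B, ‖a ξ‖ ^ 2) ^ 2 :=
        integral_norm_expSum_pow_four_le h
    _ ≤ (16 * E + 1) * σ ^ 4 + (σ ^ 2) ^ 2 := by
        gcongr
        exact weightedEnergy_le_of_dyadic_level hE hσ mass hcard hj hle hge
    _ = (16 * E + 2) * σ ^ 4 := by ring

theorem integral_norm_expSum_pow_four_le_of_addEnergy_le [DecidableEq V] [IsProbabilityMeasure μ]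
    {E : ℕ} (h : IsAlmostDecorrelating μ A) (hE : ∀ B ⊆ A, B.addEnergy B ≤ E * B.card ^ 2) :
    ∫ x, ‖expSum A a x‖ ^ 4 ∂μ ≤
      (Nat.log 2 A.card + 2) ^ 4 * ((16 * E + 2) * (∑ ξ ∈ A, ‖a ξ‖ ^ 2) ^ 2) := by
  set s := ∑ ξ ∈ A, ‖a ξ‖ ^ 2 with s_def
  set J := Nat.log 2 A.card + 1 with J_def
  have sq_sqrt_s : √s ^ 2 = s := Real.sq_sqrt (Finset.sum_nonneg fun _ _ => by positivity)
  have norm_le : ∀ ξ ∈ A, ‖a ξ‖ ≤ √s := fun ξ hξ => Real.le_sqrt_of_sq_le <|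
    Finset.single_le_sum (f := fun ξ => ‖a ξ‖ ^ 2) (fun _ _ => by positivity) hξ
  have card_le : (A.card : ℝ) ≤ 2 ^ J := by
    exact_mod_cast (Nat.lt_pow_succ_log_self one_lt_two A.card).le
  choose! level level_le hle hge using fun ξ hξ => exists_dyadic_level (norm_le ξ hξ) J
  have level_integral_le : ∀ j ∈ Finset.range (J + 1),
      ∫ x, ‖expSum {ξ ∈ A | level ξ = j} a x‖ ^ 4 ∂μ ≤ (16 * E + 2) * s ^ 2 := by
    intro j hj
    have hBA : {ξ ∈ A | level ξ = j} ⊆ A := Finset.filter_subset _ _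
    have level_eq {ξ} (hξ : ξ ∈ {ξ ∈ A | level ξ = j}) : level ξ = j := (Finset.mem_filter.1 hξ).2
    rw [← sq_sqrt_s, ← pow_mul]
    refine integral_norm_expSum_pow_four_le_of_dyadic_level (h.mono hBA) (hE _ hBA)
      (Real.sqrt_nonneg s) ?_ ((Nat.cast_le.2 (Finset.card_le_card hBA)).trans card_le)
      (Finset.mem_range_succ_iff.1 hj) (fun ξ hξ => level_eq hξ ▸ hle ξ (hBA hξ))
      fun hlt ξ hξ => level_eq hξ ▸ hge ξ (hBA hξ) (level_eq hξ ▸ hlt)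
    rw [sq_sqrt_s]
    exact Finset.sum_le_sum_of_subset_of_nonneg hBA fun _ _ _ => by positivity
  calc ∫ x, ‖expSum A a x‖ ^ 4 ∂μ ≤ (Finset.range (J + 1)).card ^ 3 *
        ∑ j ∈ Finset.range (J + 1), ∫ x, ‖expSum {ξ ∈ A | level ξ = j} a x‖ ^ 4 ∂μ :=
        integral_norm_expSum_pow_four_le_sum_fiberwise ⟨0, by simp⟩
          fun ξ hξ => Finset.mem_range_succ_iff.2 (level_le ξ hξ)
    _ ≤ (Finset.range (J + 1)).card ^ 3 *
        ((Finset.range (J + 1)).card * ((16 * E + 2) * s ^ 2)) := by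
        gcongr
        rw [← nsmul_eq_mul]
        exact Finset.sum_le_card_nsmul _ _ _ level_integral_le
    _ = (Nat.log 2 A.card + 2) ^ 4 * ((16 * E + 2) * s ^ 2) := by
        rw [Finset.card_range, J_def]
        push_cast
        ring

end ExpSum

/-! ### Averages over large balls -/

section UniformBall

variable {V : Type*} [NormedAddCommGroup V] [InnerProductSpace ℝ V] [FiniteDimensional ℝ V]
  [MeasurableSpace V] [BorelSpace V]

/-- The uniform probability measure on the ball of centre `c` and radius `R`. -/
def uniformBall (c : V) (R : ℝ) : Measure V := ProbabilityTheory.cond volume (Metric.ball c R)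

theorem isProbabilityMeasure_uniformBall (c : V) {R : ℝ} (hR : 0 < R) :
    IsProbabilityMeasure (uniformBall c R) :=
  ProbabilityTheory.cond_isProbabilityMeasure_of_finite (Metric.measure_ball_pos volume c hR).ne'
    measure_ball_lt_top.ne

variable {F : Type*} [NormedAddCommGroup F] [NormedSpace ℝ F]

theorem integral_uniformBall (c : V) (R : ℝ) (f : V → F) :
    ∫ x, f x ∂uniformBall c R =
      (volume (Metric.ball c R)).toReal⁻¹ • ∫ x in Metric.ball c R, f x := by
  rw [uniformBall, ProbabilityTheory.cond, integral_smul_measure, ENNReal.toReal_inv]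

theorem setIntegral_ball_eq (c : V) {R : ℝ} (hR : 0 < R) (f : V → F) :
    ∫ x in Metric.ball c R, f x =
      R ^ Module.finrank ℝ V • ∫ x in Metric.ball 0 1, f (c + R • x) := by
  have translate := (measurePreserving_add_left volume c).setIntegral_preimage_emb
    (measurableEmbedding_addLeft c) f (Metric.ball c R)
  rw [preimage_add_ball, sub_self] at translate
  rw [Measure.setIntegral_comp_smul_of_pos volume (fun x => f (c + x)) _ hR,
    smul_unitBall_of_pos hR, smul_inv_smul₀ (pow_pos hR _).ne', translate]

theorem integral_uniformBall_eq (c : V) {R : ℝ} (hR : 0 < R) (f : V → F) :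
    ∫ x, f x ∂uniformBall c R = ∫ x, f (c + R • x) ∂uniformBall 0 1 := by
  rw [integral_uniformBall, integral_uniformBall, setIntegral_ball_eq c hR,
    Measure.addHaar_ball_of_pos volume c hR, ENNReal.toReal_mul,
    ENNReal.toReal_ofReal (by positivity), smul_smul, mul_inv_rev, mul_assoc,
    inv_mul_cancel₀ (pow_pos hR _).ne', mul_one]

theorem norm_integral_ee_uniformBall (v c : V) {R : ℝ} (hR : 0 < R) :
    ‖∫ x, ee ⟪v, x⟫ ∂uniformBall c R‖ = ‖∫ x, ee ⟪R • v, x⟫ ∂uniformBall 0 1‖ := by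
  have modulate (x : V) : ee ⟪v, c + R • x⟫ = ee ⟪v, c⟫ * ee ⟪R • v, x⟫ := by
    rw [inner_add_right, ee_add, real_inner_smul_left, real_inner_smul_right]
  rw [integral_uniformBall_eq c hR]
  simp only [modulate, integral_const_mul]
  rw [norm_mul, norm_ee, one_mul]

theorem tendsto_setIntegral_ee_cocompact {s : Set V} (hs : MeasurableSet s) :
    Filter.Tendsto (fun w : V => ∫ x in s, ee ⟪w, x⟫) (Filter.cocompact V) (nhds 0) := by
  refine ((tendsto_integral_exp_inner_smul_cocompact (s.indicator fun _ : V => (1 : ℂ))).comp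
    (Homeomorph.neg V).isClosedEmbedding.tendsto_cocompact).congr fun w => ?_
  rw [← integral_indicator hs]
  simp only [Function.comp_apply, Homeomorph.coe_neg, inner_neg_right, neg_neg]
  congr 1 with x
  by_cases hx : x ∈ s
  · simp only [Set.indicator_of_mem hx, Circle.smul_def, coe_fourierChar, real_inner_comm,
      smul_eq_mul, mul_one]
  · simp only [Set.indicator_of_notMem hx, smul_zero]

theorem tendsto_integral_ee_uniformBall_one {v : V} (hv : v ≠ 0) :
    Filter.Tendsto (fun R : ℝ => ∫ x, ee ⟪R • v, x⟫ ∂uniformBall 0 1) Filter.atTop (nhds 0) := by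
  have dilate : Filter.Tendsto (fun R : ℝ => R • v) Filter.atTop (Filter.cocompact V) :=
    (isClosedEmbedding_smul_left hv).tendsto_cocompact.mono_left atTop_le_cocompact
  simp only [integral_uniformBall]
  simpa only [Function.comp_apply, smul_zero] using
    ((tendsto_setIntegral_ee_cocompact measurableSet_ball).comp dilate).const_smul
      (volume (Metric.ball (0 : V) 1)).toReal⁻¹

theorem eventually_isAlmostDecorrelating_uniformBall (A : Finset V) :
    ∀ᶠ R in Filter.atTop, ∀ c, IsAlmostDecorrelating (uniformBall c R) A := by
  have eventually_small : ∀ t ∈ (A ×ˢ A) ×ˢ A ×ˢ A, ∀ᶠ R : ℝ in Filter.atTop,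
      alternatingSum t ≠ 0 →
        ‖∫ x, ee ⟪R • alternatingSum t, x⟫ ∂uniformBall 0 1‖ * A.card ^ 2 ≤ 1 := by
    intro t _
    obtain h0 | hne := eq_or_ne (alternatingSum t) 0
    · exact .of_forall fun R hne => absurd h0 hne
    · have limit := (tendsto_integral_ee_uniformBall_one hne).norm.mul_const ((A.card : ℝ) ^ 2)
      rw [norm_zero, zero_mul] at limit
      exact (limit.eventually_le_const one_pos).mono fun R hR _ => hR
  filter_upwards [(Filter.eventually_all_finset _).2 eventually_small,
    Filter.eventually_gt_atTop 0] with R small hR c t ht hne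
  rw [norm_integral_ee_uniformBall _ c hR]
  exact small t ht hne

end UniformBall

theorem eventually_integral_uniformBall_le {A : Finset (EuclideanSpace ℝ (Fin 3))}
    (hA : ↑A ⊆ ellipticParaboloid) :
    ∀ᶠ R in Filter.atTop, ∀ c a, ∫ x, ‖expSum A a x‖ ^ 4 ∂uniformBall c R ≤
      150560 * (Nat.log 2 A.card + 2) ^ 5 * (∑ ξ ∈ A, ‖a ξ‖ ^ 2) ^ 2 := by
  filter_upwards [eventually_isAlmostDecorrelating_uniformBall A,
    Filter.eventually_gt_atTop 0] with R hR R_pos c a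
  have := isProbabilityMeasure_uniformBall c R_pos
  set ℓ := Nat.log 2 A.card
  have energy : ∀ B ⊆ A, B.addEnergy B ≤ 9410 * (ℓ + 1) * B.card ^ 2 := fun B hBA =>
    calc B.addEnergy B ≤ 9410 * B.card ^ 2 * (Nat.log 2 B.card + 1) :=
          addEnergy_le_of_subset_ellipticParaboloid
            ((Finset.coe_subset.2 hBA).trans hA)
      _ ≤ 9410 * B.card ^ 2 * (ℓ + 1) := by
          gcongr
          exact Nat.log_mono_right (Finset.card_le_card hBA)
      _ = 9410 * (ℓ + 1) * B.card ^ 2 := by ring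
  calc ∫ x, ‖expSum A a x‖ ^ 4 ∂uniformBall c R
      ≤ (ℓ + 2) ^ 4 * ((16 * (9410 * (ℓ + 1) : ℕ) + 2) * (∑ ξ ∈ A, ‖a ξ‖ ^ 2) ^ 2) :=
        integral_norm_expSum_pow_four_le_of_addEnergy_le (hR c) energy
    _ ≤ (ℓ + 2) ^ 4 * (150560 * (ℓ + 2) * (∑ ξ ∈ A, ‖a ξ‖ ^ 2) ^ 2) := by
        gcongr
        push_cast
        linarith
    _ = 150560 * (ℓ + 2) ^ 5 * (∑ ξ ∈ A, ‖a ξ‖ ^ 2) ^ 2 := by ring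

theorem exists_natLog_add_two_le_mul_rpow {δ : ℝ} (hδ : 0 < δ) :
    ∃ D > (0 : ℝ), ∀ n : ℕ, n ≠ 0 → (Nat.log 2 n + 2 : ℝ) ≤ D * (n : ℝ) ^ δ := by
  refine ⟨1 / (δ * Real.log 2) + 2, by positivity, fun n hn => ?_⟩
  have one_le_rpow : (1 : ℝ) ≤ (n : ℝ) ^ δ :=
    Real.one_le_rpow (by exact_mod_cast Nat.one_le_iff_ne_zero.2 hn) hδ.le
  calc (Nat.log 2 n + 2 : ℝ) ≤ Real.log n / Real.log 2 + 2 * (n : ℝ) ^ δ := by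
        have := Real.natLog_le_logb n 2
        rw [Real.logb, Nat.cast_ofNat] at this
        linarith
    _ ≤ (n : ℝ) ^ δ / δ / Real.log 2 + 2 * (n : ℝ) ^ δ := by
        gcongr
        exact Real.log_le_rpow_div n.cast_nonneg hδ
    _ = (1 / (δ * Real.log 2) + 2) * (n : ℝ) ^ δ := by field_simp

theorem exists_mul_natLog_pow_le {K ε : ℝ} (hK : 0 < K) (hε : 0 < ε) :
    ∃ C > (0 : ℝ), ∀ n : ℕ, n ≠ 0 → K * (Nat.log 2 n + 2) ^ 5 ≤ (C * (n : ℝ) ^ ε) ^ 4 := by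
  obtain ⟨D, hD, hlog⟩ := exists_natLog_add_two_le_mul_rpow (δ := 4 * ε / 5) (by positivity)
  refine ⟨(K * D ^ 5) ^ (4⁻¹ : ℝ), by positivity, fun n hn => ?_⟩
  calc K * (Nat.log 2 n + 2) ^ 5 ≤ K * (D * (n : ℝ) ^ (4 * ε / 5)) ^ 5 := by
        gcongr
        exact hlog n hn
    _ = K * D ^ 5 * ((n : ℝ) ^ (4 * ε / 5)) ^ 5 := by ring
    _ = ((K * D ^ 5) ^ (4⁻¹ : ℝ)) ^ 4 * ((n : ℝ) ^ ε) ^ 4 := by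
        congr 1
        · exact (Real.rpow_inv_natCast_pow (by positivity) four_ne_zero).symm
        · rw [← Real.rpow_mul_natCast n.cast_nonneg, ← Real.rpow_mul_natCast n.cast_nonneg]
          push_cast
          ring_nf
    _ = ((K * D ^ 5) ^ (4⁻¹ : ℝ) * (n : ℝ) ^ ε) ^ 4 := by ring

theorem discrete_restriction_large_R_P2_general :
    ∀ ε > (0 : ℝ), ∃ C > (0 : ℝ),
      ∀ Λ : Finset (EuclideanSpace ℝ (Fin 3)), ↑Λ ⊆ ellipticParaboloid →
        ∃ R₀ : ℝ, ∀ R : ℝ, R₀ ≤ R → ∀ c : EuclideanSpace ℝ (Fin 3),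
          ∀ a : EuclideanSpace ℝ (Fin 3) → ℂ,
            ((volume (Metric.ball c R)).toReal⁻¹ *
                ∫ x in Metric.ball c R, ‖∑ ξ ∈ Λ, a ξ * ee ⟪ξ, x⟫‖ ^ (4 : ℝ)) ^ (1 / 4 : ℝ) ≤
              C * (Λ.card : ℝ) ^ ε * (∑ ξ ∈ Λ, ‖a ξ‖ ^ 2) ^ (1 / 2 : ℝ) := by
  intro ε hε
  obtain ⟨C, hC, hlog⟩ := exists_mul_natLog_pow_le (K := 150560) (by norm_num) hε
  refine ⟨C, hC, fun Λ hΛ => ?_⟩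
  obtain ⟨R₀, hR₀⟩ := Filter.eventually_atTop.1 (eventually_integral_uniformBall_le hΛ)
  refine ⟨R₀, fun R hR c a => ?_⟩
  obtain rfl | hne := Λ.eq_empty_or_nonempty
  · simp
  set s := ∑ ξ ∈ Λ, ‖a ξ‖ ^ 2
  have hs : 0 ≤ s := Finset.sum_nonneg fun _ _ => by positivity
  rw [one_div, Real.rpow_inv_le_iff_of_pos (by positivity) (by positivity) four_pos]
  norm_cast
  calc (volume (Metric.ball c R)).toReal⁻¹ * ∫ x in Metric.ball c R, ‖expSum Λ a x‖ ^ 4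
      = ∫ x, ‖expSum Λ a x‖ ^ 4 ∂uniformBall c R := (integral_uniformBall c R _).symm
    _ ≤ 150560 * (Nat.log 2 Λ.card + 2) ^ 5 * s ^ 2 := hR₀ R hR c a
    _ ≤ (C * (Λ.card : ℝ) ^ ε) ^ 4 * s ^ 2 := by
        gcongr
        exact hlog _ hne.card_ne_zero
    _ = (C * (Λ.card : ℝ) ^ ε * s ^ (1 / 2 : ℝ)) ^ 4 := by
        rw [mul_pow _ (s ^ (1 / 2 : ℝ)), ← Real.sqrt_eq_rpow]
        linear_combination -(C * (Λ.card : ℝ) ^ ε) ^ 4 * (√s ^ 2 + s) * Real.sq_sqrt hs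

theorem discrete_restriction_large_R_P2 :
    ∀ ε > (0 : ℝ), ∃ C > (0 : ℝ),
      ∀ Λ : Finset (EuclideanSpace ℝ (Fin 3)), ↑Λ ⊆ parab2 →
        ∃ R₀ : ℝ, ∀ R : ℝ, R₀ ≤ R → ∀ c : EuclideanSpace ℝ (Fin 3),
          ∀ a : EuclideanSpace ℝ (Fin 3) → ℂ,
            ((volume (Metric.ball c R)).toReal⁻¹ *
                ∫ x in Metric.ball c R, ‖∑ ξ ∈ Λ, a ξ * ee ⟪ξ, x⟫‖ ^ (4 : ℝ)) ^ (1 / 4 : ℝ) ≤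
              C * (Λ.card : ℝ) ^ ε * (∑ ξ ∈ Λ, ‖a ξ‖ ^ 2) ^ (1 / 2 : ℝ) := by
  intro ε hε
  obtain ⟨C, hC, h⟩ := discrete_restriction_large_R_P2_general ε hε
  exact ⟨C, hC, fun Λ hΛ => h Λ fun ξ hξ => (hΛ hξ).2.2⟩

end
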